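/- arXiv:2510.25691 — 2 statements merged into one kernel-verified Lean document; each statement's English description precedes it below -/
import Mathlib

section
/- There exists an absolute constant C > 0 such that for every x ≥ 3 and every real-valued multiplicative function f with |f(n)| ≤ 1 for all n and f(n) = 0 whenever n has a prime factor exceeding x^{0.99}, one has |∑_{n ≤ x} f(n)| ≤ C·x·exp(∑_{p ≤ x} f(p)/p), where the sum in the exponential is over primes p ≤ x. -/
section
open Finset

/-- The local terms of the analytic continuation. -/
noncomputable def eterm (n : ℕ) (s : ℂ) : ℂ :=
  (s - 1) * ((n + 1 : ℕ) : ℂ) ^ (-s) + ((n + 1 + 1 : ℕ) : ℂ) ^ (1 - s) - ((n + 1 : ℕ) : ℂ) ^ (1 - s)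

lemma cpow_sub_bound (n : ℕ) (s : ℂ) (hs : 0 < s.re) (x : ℝ) (hx : (n + 1 : ℝ) ≤ x)
    (hx2 : x ≤ (n + 1 : ℝ) + 1) :
    ‖((n + 1 : ℝ) : ℂ) ^ (-s) - (x : ℂ) ^ (-s)‖ ≤
      2 * (‖s‖ ^ (1/50 : ℝ) * (n + 1 : ℝ) ^ (-(s.re + 1/50))) := by
  have hn : (0 : ℝ) < n + 1 := by positivity
  have hs0 : 0 < ‖s‖ := by
    have := Complex.re_le_norm s
    linarith
  have key : ‖s‖ ^ (1/50 : ℝ) * (n + 1 : ℝ) ^ (-(s.re + 1/50)) =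
      (‖s‖ / (n + 1)) ^ (1/50 : ℝ) * (n + 1 : ℝ) ^ (-s.re) := by
    rw [Real.div_rpow hs0.le hn.le, neg_add, Real.rpow_add hn, Real.rpow_neg hn.le (1/50)]
    field_simp
  have hA : 0 < (n + 1 : ℝ) ^ (-s.re) := Real.rpow_pos_of_pos hn _
  rw [key]
  rcases le_total 1 (‖s‖ / (n + 1)) with h | h
  · have h1 : 1 ≤ (‖s‖ / (n + 1)) ^ (1/50 : ℝ) := Real.one_le_rpow h (by norm_num)
    have h2 : ‖((n + 1 : ℝ) : ℂ) ^ (-s)‖ = (n + 1 : ℝ) ^ (-s.re) := by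
      rw [Complex.norm_cpow_eq_rpow_re_of_pos hn]; simp
    have h3 : ‖(x : ℂ) ^ (-s)‖ ≤ (n + 1 : ℝ) ^ (-s.re) := by
      rw [Complex.norm_cpow_eq_rpow_re_of_pos (by linarith)]
      exact Real.rpow_le_rpow_of_nonpos hn hx (by simp; linarith)
    calc _ ≤ ‖((n + 1 : ℝ) : ℂ) ^ (-s)‖ + ‖(x : ℂ) ^ (-s)‖ := norm_sub_le _ _
      _ ≤ 2 * (1 * (n + 1 : ℝ) ^ (-s.re)) := by linarith
      _ ≤ _ := by gcongr
  · have h1 : ‖s‖ / (n + 1) ≤ (‖s‖ / (n + 1)) ^ (1/50 : ℝ) := by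
      have := Real.rpow_le_rpow_of_exponent_ge (by positivity : 0 < ‖s‖ / (n + 1 : ℝ)) h
        (by norm_num : (1/50 : ℝ) ≤ 1)
      simpa using this
    have h2 : ‖(x : ℂ) ^ (-s) - ((n + 1 : ℝ) : ℂ) ^ (-s)‖ ≤
        (‖s‖ / (n + 1) * (n + 1 : ℝ) ^ (-s.re)) * ‖x - (n + 1)‖ := by
      have := Convex.norm_image_sub_le_of_norm_hasDerivWithin_le
        (f := fun y : ℝ ↦ (y : ℂ) ^ (-s)) (f' := fun y : ℝ ↦ (-s) * (y : ℂ) ^ (-s - 1))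
        (s := Set.Icc (n + 1 : ℝ) ((n + 1 : ℝ) + 1))
        (C := ‖s‖ / (n + 1) * (n + 1 : ℝ) ^ (-s.re)) (x := (n + 1 : ℝ)) (y := x)
        ?_ ?_ (convex_Icc _ _) (by simp) ⟨hx, hx2⟩
      · simpa using this
      · intro y hy
        have hy0 : (0 : ℝ) < y := by linarith [hy.1]
        have hs' : -s ≠ 0 := by simpa using hs0.ne'
        exact (hasDerivAt_ofReal_cpow_const (x := y) hy0.ne' hs').hasDerivWithinAt
      · intro y hy
        have hy0 : (0 : ℝ) < y := by linarith [hy.1]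
        rw [norm_mul, norm_neg, Complex.norm_cpow_eq_rpow_re_of_pos hy0]
        have : y ^ (-s - 1 : ℂ).re ≤ (n + 1 : ℝ) ^ (-s.re - 1) := by
          have : (-s - 1 : ℂ).re = -s.re - 1 := by simp
          rw [this]
          exact Real.rpow_le_rpow_of_nonpos hn hy.1 (by linarith)
        calc _ ≤ ‖s‖ * (n + 1 : ℝ) ^ (-s.re - 1) := by gcongr
          _ = _ := by rw [Real.rpow_sub_one hn.ne']; field_simp
    rw [norm_sub_rev]
    have h3 : ‖x - (n + 1)‖ ≤ 1 := by rw [Real.norm_eq_abs, abs_le]; constructor <;> linarith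
    calc _ ≤ _ := h2
      _ ≤ ((‖s‖ / (n + 1)) ^ (1/50 : ℝ) * (n + 1 : ℝ) ^ (-s.re)) * 1 := by gcongr
      _ ≤ _ := by
        have : 0 ≤ ((‖s‖ / (n + 1)) ^ (1/50 : ℝ) * (n + 1 : ℝ) ^ (-s.re)) := by positivity
        linarith

lemma eterm_bound (n : ℕ) (s : ℂ) (hs : 0 < s.re) :
    ‖eterm n s‖ ≤ ‖s - 1‖ * (2 * (‖s‖ ^ (1/50 : ℝ) * (n + 1 : ℝ) ^ (-(s.re + 1/50)))) := by
  have := Convex.norm_image_sub_le_of_norm_hasDerivWithin_le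
    (f := fun y : ℝ ↦ (s - 1) * ((n + 1 : ℝ) : ℂ) ^ (-s) * (y : ℂ) + (y : ℂ) ^ (1 - s))
    (f' := fun y : ℝ ↦ (s - 1) * (((n + 1 : ℝ) : ℂ) ^ (-s) - (y : ℂ) ^ (-s)))
    (s := Set.Icc (n + 1 : ℝ) ((n + 1 : ℝ) + 1))
    (C := ‖s - 1‖ * (2 * (‖s‖ ^ (1/50 : ℝ) * (n + 1 : ℝ) ^ (-(s.re + 1/50)))))
    (x := (n + 1 : ℝ)) (y := (n + 1 : ℝ) + 1) ?_ ?_ (convex_Icc _ _) (by simp) (by simp)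
  · have e : (s - 1) * ((n + 1 : ℝ) : ℂ) ^ (-s) * (((n + 1 : ℝ) + 1 : ℝ) : ℂ)
        + (((n + 1 : ℝ) + 1 : ℝ) : ℂ) ^ (1 - s) - ((s - 1) * ((n + 1 : ℝ) : ℂ) ^ (-s) *
          (((n + 1 : ℝ) : ℝ) : ℂ) + (((n + 1 : ℝ) : ℝ) : ℂ) ^ (1 - s)) = eterm n s := by
      unfold eterm
      push_cast
      ring
    rw [e] at this
    simpa using this
  · intro y hy
    have hy0 : (0 : ℝ) < y := by
      have : (0 : ℝ) < n + 1 := by positivity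
      linarith [hy.1]
    have hd : HasDerivAt (fun y : ℝ ↦ (y : ℂ) ^ (1 - s)) ((1 - s) * (y : ℂ) ^ (-s)) y := by
      by_cases h1 : s = 1
      · subst h1
        simpa using hasDerivAt_const y (1 : ℂ)
      · have h2 : (1 - s) ≠ 0 := sub_ne_zero.mpr (Ne.symm h1)
        refine (hasDerivAt_ofReal_cpow_const (x := y) hy0.ne' h2).congr_deriv ?_
        congr 2
        ring
    have h4 : HasDerivAt (fun y : ℝ ↦ (s - 1) * ((n + 1 : ℝ) : ℂ) ^ (-s) * (y : ℂ))
      ((s - 1) * ((n + 1 : ℝ) : ℂ) ^ (-s)) y := by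
      simpa using (Complex.ofRealCLM.hasDerivAt (x := y)).const_mul ((s - 1) * ((n + 1 : ℝ) : ℂ) ^ (-s))
    refine ((h4.add hd).congr_deriv ?_).hasDerivWithinAt
    ring
  · intro y hy
    rw [norm_mul]
    gcongr
    exact cpow_sub_bound n s hs y hy.1 hy.2

lemma eterm_summable : Summable (fun n : ℕ ↦ (n + 1 : ℝ) ^ (-(1 + 1/100 : ℝ))) := by
  have := (summable_nat_add_iff 1).mpr (Real.summable_nat_rpow.mpr (by norm_num : (-(1 + 1/100 : ℝ)) < -1))
  simpa using this

lemma eterm_bound2 (n : ℕ) (s : ℂ) (hs : 1 - 1/100 ≤ s.re) :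
    ‖eterm n s‖ ≤ (2 * ‖s - 1‖ * ‖s‖ ^ (1/50 : ℝ)) * (n + 1 : ℝ) ^ (-(1 + 1/100 : ℝ)) := by
  refine (eterm_bound n s (by linarith)).trans ?_
  have : (n + 1 : ℝ) ^ (-(s.re + 1/50)) ≤ (n + 1 : ℝ) ^ (-(1 + 1/100 : ℝ)) := by
    apply Real.rpow_le_rpow_of_exponent_le
    · have : (0:ℝ) ≤ n := by positivity
      linarith
    · linarith
  calc _ = (2 * ‖s - 1‖ * ‖s‖ ^ (1/50 : ℝ)) * (n + 1 : ℝ) ^ (-(s.re + 1/50)) := by ring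
    _ ≤ _ := by gcongr

lemma eterm_hasSum (s : ℂ) (hs : 1 < s.re) : HasSum (fun n ↦ eterm n s) (riemannZeta₁ s - 1) := by
  have hs1 : s ≠ 1 := by rintro rfl; simp at hs
  have h1 : HasSum (fun n : ℕ ↦ ((n + 1 : ℕ) : ℂ) ^ (-s)) (riemannZeta s) := by
    have := zeta_eq_tsum_one_div_nat_add_one_cpow hs
    rw [this]
    have h2 : Summable (fun n : ℕ ↦ 1 / (n + 1 : ℂ) ^ s) := by
      have := (summable_nat_add_iff 1).mpr (Complex.summable_one_div_nat_cpow.mpr hs)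
      simpa using this
    convert h2.hasSum using 1
    funext n
    rw [Complex.cpow_neg, one_div]
    push_cast
    rfl
  have h2 : HasSum (fun n : ℕ ↦ ((n + 1 + 1 : ℕ) : ℂ) ^ (1 - s) - ((n + 1 : ℕ) : ℂ) ^ (1 - s)) (0 - 1) := by
    have hsum : Summable (fun n : ℕ ↦ ((n + 1 + 1 : ℕ) : ℂ) ^ (1 - s) - ((n + 1 : ℕ) : ℂ) ^ (1 - s)) := by
      have h3 : Summable (fun n : ℕ ↦ eterm n s) :=
        Summable.of_norm_bounded (eterm_summable.mul_left _) (fun n ↦ eterm_bound2 n s (by linarith))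
      refine (h3.sub (h1.summable.mul_left (s - 1))).congr fun n ↦ ?_
      unfold eterm
      ring
    rw [hsum.hasSum_iff_tendsto_nat]
    have : ∀ N, ∑ n ∈ range N, (((n + 1 + 1 : ℕ) : ℂ) ^ (1 - s) - ((n + 1 : ℕ) : ℂ) ^ (1 - s)) =
        ((N + 1 : ℕ) : ℂ) ^ (1 - s) - 1 := by
      intro N
      rw [Finset.sum_range_sub (fun n : ℕ ↦ ((n + 1 : ℕ) : ℂ) ^ (1 - s))]
      simp
    simp_rw [this]
    refine Filter.Tendsto.sub_const ?_ 1
    rw [tendsto_zero_iff_norm_tendsto_zero]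
    have h5 : ∀ N : ℕ, ‖((N + 1 : ℕ) : ℂ) ^ (1 - s)‖ = ((N + 1 : ℕ) : ℝ) ^ (-(s.re - 1)) := by
      intro N
      rw [Complex.norm_natCast_cpow_of_pos (by omega)]
      simp
    simp_rw [h5]
    exact ((tendsto_rpow_neg_atTop (by linarith : 0 < s.re - 1)).comp tendsto_natCast_atTop_atTop).comp
      (Filter.tendsto_add_atTop_nat 1)
  have h3 := (h1.mul_left (s - 1)).add h2
  have h4 : (s - 1) * riemannZeta s + (0 - 1) = riemannZeta₁ s - 1 := by
    rw [riemannZeta_eq_inv_sub_mul hs1]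
    have := sub_ne_zero.mpr hs1
    field_simp
    ring
  rw [← h4]
  refine h3.congr_fun ?_ 
  intro n
  unfold eterm
  ring

lemma zeta1_eq (s : ℂ) (hs : 1 - 1/100 < s.re) : riemannZeta₁ s = 1 + ∑' n, eterm n s := by
  set R : ℝ := ‖s‖ + 3 with hR
  set U : Set ℂ := {z : ℂ | 1 - 1/100 < z.re} ∩ Metric.ball 0 R with hU
  have hUo : IsOpen U := (isOpen_lt continuous_const Complex.continuous_re).inter Metric.isOpen_ball
  have hUc : Convex ℝ U := (convex_halfSpace_re_gt _).inter (convex_ball _ _)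
  have hd : DifferentiableOn ℂ (fun z ↦ 1 + ∑' n, eterm n z) U := by
    refine DifferentiableOn.const_add _ ?_
    refine Complex.differentiableOn_tsum_of_summable_norm
      (u := fun n : ℕ ↦ (2 * (R + 1) * R ^ (1/50 : ℝ)) * (n + 1 : ℝ) ^ (-(1 + 1/100 : ℝ)))
      (eterm_summable.mul_left _) ?_ hUo ?_
    · intro n
      unfold eterm
      have h1 : ((n + 1 : ℕ) : ℂ) ≠ 0 := Nat.cast_ne_zero.mpr (by omega)
      have h2 : ((n + 1 + 1 : ℕ) : ℂ) ≠ 0 := Nat.cast_ne_zero.mpr (by omega)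
      intro z hz
      apply DifferentiableAt.differentiableWithinAt
      refine DifferentiableAt.sub (DifferentiableAt.add (DifferentiableAt.mul (by fun_prop) ?_) ?_) ?_
      · exact DifferentiableAt.const_cpow (by fun_prop) (Or.inl h1)
      · exact DifferentiableAt.const_cpow (by fun_prop) (Or.inl h2)
      · exact DifferentiableAt.const_cpow (by fun_prop) (Or.inl h1)
    · intro n z hz
      refine (eterm_bound2 n z (le_of_lt hz.1)).trans ?_
      have hz2 : ‖z‖ ≤ R := by simpa using (Metric.mem_ball.mp hz.2).le
      have hz3 : ‖z - 1‖ ≤ R + 1 := (norm_sub_le _ _).trans (by simpa using hz2)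
      gcongr
  have h1 : AnalyticOnNhd ℂ (fun z ↦ 1 + ∑' n, eterm n z) U := hd.analyticOnNhd hUo
  have h2 : AnalyticOnNhd ℂ riemannZeta₁ U :=
    differentiable_riemannZeta₁.differentiableOn.analyticOnNhd hUo
  have h3 : (2 : ℂ) ∈ U := by
    constructor
    · simp; norm_num
    · simp [hR]; linarith [norm_nonneg s]
  refine h2.eqOn_of_preconnected_of_eventuallyEq h1 hUc.isPreconnected h3 ?_ ⟨hs, by simp [hR]⟩
  have : {z : ℂ | 1 < z.re} ∈ nhds (2 : ℂ) :=
    (isOpen_lt continuous_const Complex.continuous_re).mem_nhds (by simp)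
  filter_upwards [this] with z hz
  rw [(eterm_hasSum z hz).tsum_eq]
  ring

lemma zeta1_bound : ∃ K : ℝ, 1 ≤ K ∧ ∀ s : ℂ, 1 - 1/100 < s.re →
    ‖riemannZeta₁ s‖ ≤ 1 + K * ‖s - 1‖ * ‖s‖ ^ (1/50 : ℝ) := by
  refine ⟨2 * ∑' n : ℕ, (n + 1 : ℝ) ^ (-(1 + 1/100 : ℝ)), ?_, ?_⟩
  · have := eterm_summable.le_tsum 0 (fun i _ ↦ by positivity)
    norm_num at this
    norm_num
    linarith
  · intro s hs
    rw [zeta1_eq s hs]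
    refine (norm_add_le _ _).trans ?_
    simp only [norm_one]
    gcongr
    refine (tsum_of_norm_bounded (eterm_summable.mul_left _).hasSum
      (fun n ↦ eterm_bound2 n s hs.le)).trans ?_
    rw [tsum_mul_left]
    apply le_of_eq
    ring
end

section
open Finset

lemma zeta_bound0 : ∃ C : ℝ, 1 ≤ C ∧ ∀ s : ℂ, 1 - 1/100 < s.re → s.re ≤ 4 → 1/2 ≤ |s.im| →
    ‖riemannZeta s‖ ≤ C * |s.im| ^ (1/50 : ℝ) := by
  obtain ⟨K, hK, h⟩ := zeta1_bound
  refine ⟨4 + 9 * K, by linarith, fun s hs hs4 ht ↦ ?_⟩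
  have hs1 : s ≠ 1 := by rintro rfl; norm_num at ht
  have h0 : 1/2 ≤ ‖s - 1‖ := by
    have := Complex.abs_im_le_norm (s - 1)
    simp at this
    simp at ht ⊢
    linarith
  have hpos : 0 < ‖s - 1‖ := by linarith
  have hsn : ‖s‖ ≤ 9 * |s.im| := by
    have := Complex.norm_le_abs_re_add_abs_im s
    have h2 : |s.re| ≤ 4 := abs_le.mpr ⟨by linarith, hs4⟩
    linarith
  have h2 : ‖s‖ ^ (1/50 : ℝ) ≤ 9 * |s.im| ^ (1/50 : ℝ) := by
    calc _ ≤ (9 * |s.im|) ^ (1/50 : ℝ) := by gcongr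
      _ = 9 ^ (1/50 : ℝ) * |s.im| ^ (1/50 : ℝ) := Real.mul_rpow (by norm_num) (by positivity)
      _ ≤ 9 ^ (1 : ℝ) * |s.im| ^ (1/50 : ℝ) := by
        gcongr <;> norm_num
      _ = _ := by norm_num
  have h3 : 1/2 ≤ |s.im| ^ (1/50 : ℝ) := by
    calc (1/2 : ℝ) = (1/2 : ℝ) ^ (1 : ℝ) := by norm_num
      _ ≤ (1/2 : ℝ) ^ (1/50 : ℝ) :=
        Real.rpow_le_rpow_of_exponent_ge (by norm_num) (by norm_num) (by norm_num)
      _ ≤ _ := by gcongr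
  rw [riemannZeta_eq_inv_sub_mul hs1, norm_mul, norm_inv]
  calc _ ≤ ‖s - 1‖⁻¹ * (1 + K * ‖s - 1‖ * ‖s‖ ^ (1/50 : ℝ)) := by gcongr; exact h s hs
    _ = ‖s - 1‖⁻¹ + K * ‖s‖ ^ (1/50 : ℝ) := by field_simp
    _ ≤ 2 + K * (9 * |s.im| ^ (1/50 : ℝ)) := by
      gcongr
      rw [inv_le_comm₀ hpos (by norm_num)]
      linarith
    _ ≤ _ := by linarith

lemma zeta_bound1 : ∃ C : ℝ, 1 ≤ C ∧ ∀ s : ℂ, 1 - 1/200 ≤ s.re → s.re ≤ 3 → 1 ≤ |s.im| →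
    ‖riemannZeta s‖ ≤ C * |s.im| ^ (1/50 : ℝ) ∧ ‖deriv riemannZeta s‖ ≤ C * |s.im| ^ (1/50 : ℝ) := by
  obtain ⟨C, hC, h⟩ := zeta_bound0
  refine ⟨800 * C, by linarith, fun s hs hs4 ht ↦ ⟨?_, ?_⟩⟩
  · refine (h s (by linarith) (by linarith) (by linarith)).trans ?_
    gcongr
    linarith
  · have := Complex.norm_deriv_le_of_forall_mem_sphere_norm_le (f := riemannZeta) (c := s) (R := 1/400)
      (C := C * (2 * |s.im| ^ (1/50 : ℝ))) (by norm_num) ?_ ?_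
    · refine this.trans (le_of_eq ?_)
      ring
    · refine DifferentiableOn.diffContOnCl ?_
      intro z hz
      apply DifferentiableAt.differentiableWithinAt
      apply differentiableAt_riemannZeta
      rintro rfl
      rw [closure_ball _ (by norm_num)] at hz
      have := (Complex.abs_im_le_norm (1 - s)).trans (by simpa [dist_eq_norm] using hz)
      simp at this
      norm_num at this
      linarith
    · intro z hz
      have hz' : ‖z - s‖ = 1/400 := by simpa [dist_eq_norm] using hz
      have h1 := abs_le.mp ((Complex.abs_im_le_norm (z - s)).trans hz'.le)
      have h2 := abs_le.mp ((Complex.abs_re_le_norm (z - s)).trans hz'.le)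
      simp only [Complex.sub_re, Complex.sub_im] at h1 h2
      have h3 : |z.im| ≤ 2 * |s.im| := by
        have := abs_sub_abs_le_abs_sub z.im s.im
        have h4 : |z.im - s.im| ≤ 1/400 := abs_le.mpr h1
        linarith
      have h3' : 1/2 ≤ |z.im| := by
        have := abs_sub_abs_le_abs_sub s.im z.im
        rw [abs_sub_comm] at this
        have h4 : |z.im - s.im| ≤ 1/400 := abs_le.mpr h1
        linarith
      refine (h z (by linarith) (by linarith) h3').trans ?_
      gcongr
      calc _ ≤ (2 * |s.im|) ^ (1/50 : ℝ) := by gcongr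
        _ = 2 ^ (1/50 : ℝ) * |s.im| ^ (1/50 : ℝ) := Real.mul_rpow (by norm_num) (by positivity)
        _ ≤ 2 ^ (1 : ℝ) * |s.im| ^ (1/50 : ℝ) := by
          gcongr <;> norm_num
        _ = _ := by norm_num

lemma zeta_real_bound : ∃ C : ℝ, 1 ≤ C ∧ ∀ η : ℝ, 0 < η → η ≤ 2 →
    ‖riemannZeta (1 + η)‖ ≤ C / η := by
  obtain ⟨K, hK, h⟩ := zeta1_bound
  refine ⟨1 + 6 * K, by linarith, fun η h0 h2 ↦ ?_⟩
  have h1 : (1 + η : ℂ) ≠ 1 := by simpa using h0.ne'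
  have h3 := h (1 + η) (by simp; linarith)
  rw [riemannZeta_eq_inv_sub_mul h1, norm_mul, norm_inv]
  have h4 : ‖(1 + η - 1 : ℂ)‖ = η := by simp [abs_of_pos h0]
  have h5 : ‖(1 + η : ℂ)‖ = 1 + η := by
    have := Complex.norm_of_nonneg (r := 1 + η) (by linarith)
    simpa using this
  rw [h4] at h3 ⊢
  rw [h5] at h3
  rw [div_eq_inv_mul]
  gcongr
  refine h3.trans ?_
  have h6 : (1 + η) ^ (1/50 : ℝ) ≤ 3 := by
    calc _ ≤ (3 : ℝ) ^ (1/50 : ℝ) := by gcongr; linarith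
      _ ≤ (3 : ℝ) ^ (1 : ℝ) := by gcongr <;> norm_num
      _ = _ := by norm_num
  have h7 : 0 ≤ (1 + η) ^ (1/50 : ℝ) := by positivity
  have : K * η * (1 + η) ^ (1/50 : ℝ) ≤ K * 2 * 3 := by gcongr
  linarith

lemma zeta_three_four_one (η t : ℝ) (h : 0 < η) :
    1 ≤ ‖riemannZeta (1 + η)‖ ^ 3 * ‖riemannZeta (1 + η + Complex.I * t)‖ ^ 4 *
      ‖riemannZeta (1 + η + 2 * Complex.I * t)‖ := by
  have := DirichletCharacter.norm_LFunction_product_ge_one (1 : DirichletCharacter ℂ 1) h t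
  rw [DirichletCharacter.LFunctionTrivChar, DirichletCharacter.LFunction_modOne_eq,
    DirichletCharacter.LFunction_modOne_eq] at this
  simpa [norm_mul, norm_pow] using this

lemma zeta_lower : ∃ c : ℝ, 0 < c ∧ c ≤ 1/200 ∧ ∀ s : ℂ, 1 ≤ |s.im| →
    1 - c / (|s.im| ^ (1/50 : ℝ)) ^ 8 ≤ s.re → s.re ≤ 3 →
    c / (|s.im| ^ (1/50 : ℝ)) ^ 7 ≤ ‖riemannZeta s‖ := by
  obtain ⟨C, hC, h⟩ := zeta_bound1
  obtain ⟨D, hD, h'⟩ := zeta_real_bound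
  set B : ℝ := 2 * C * D ^ 3 with hB
  have hB1 : 1 ≤ B := by
    have : 1 ≤ D ^ 3 := one_le_pow₀ hD
    nlinarith
  set a : ℝ := 1 / (200 * C * B) with ha
  have ha0 : 0 < a := by positivity
  have ha1 : a ≤ 1/200 := by
    rw [ha]
    apply one_div_le_one_div_of_le (by norm_num)
    have : 1 ≤ C * B := by nlinarith
    linarith
  have key : ∀ s : ℂ, 1 ≤ |s.im| → s.re ≤ 3 → 1 + a ^ 4 / (|s.im| ^ (1/50 : ℝ)) ^ 8 ≤ s.re →
      a ^ 3 / B / (|s.im| ^ (1/50 : ℝ)) ^ 7 ≤ ‖riemannZeta s‖ := by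
    intro s ht hs3 hs
    set T : ℝ := |s.im| ^ (1/50 : ℝ) with hT
    have hT1 : 1 ≤ T := Real.one_le_rpow ht (by norm_num)
    set η : ℝ := s.re - 1 with hη
    have hη1 : a ^ 4 / T ^ 8 ≤ η := by linarith
    have hη0 : 0 < η := lt_of_lt_of_le (by positivity) hη1
    have h1 := zeta_three_four_one η s.im hη0
    have e1 : (1 + η + Complex.I * s.im : ℂ) = s := by
      apply Complex.ext <;> simp [hη]
    have h2 := (h (1 + η + 2 * Complex.I * s.im) (by simp [hη]; linarith) (by simp [hη]; linarith)
      (by simp [abs_mul]; linarith)).1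
    have e2 : |(1 + η + 2 * Complex.I * s.im : ℂ).im| = 2 * |s.im| := by
      simp [abs_mul]
    rw [e2] at h2
    have h3 : (2 * |s.im|) ^ (1/50 : ℝ) ≤ 2 * T := by
      calc _ = 2 ^ (1/50 : ℝ) * |s.im| ^ (1/50 : ℝ) := Real.mul_rpow (by norm_num) (by positivity)
        _ ≤ 2 ^ (1 : ℝ) * |s.im| ^ (1/50 : ℝ) := by
          gcongr <;> norm_num
        _ = _ := by rw [Real.rpow_one]
    rw [e1] at h1
    have h4 := h' η hη0 (by linarith)
    have h5 : 1 ≤ (D / η) ^ 3 * ‖riemannZeta s‖ ^ 4 * (C * (2 * T)) := by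
      refine h1.trans ?_
      gcongr
      exact h2.trans (by gcongr)
    have h6 : η ^ 3 ≤ B * T * ‖riemannZeta s‖ ^ 4 := by
      have : (D / η) ^ 3 * ‖riemannZeta s‖ ^ 4 * (C * (2 * T)) =
        (B * T * ‖riemannZeta s‖ ^ 4) / η ^ 3 := by rw [hB]; field_simp
      rw [this, le_div_iff₀ (by positivity)] at h5
      linarith
    have h7 : (a ^ 4 / T ^ 8) ^ 3 ≤ B * T * ‖riemannZeta s‖ ^ 4 := by
      refine le_trans ?_ h6
      gcongr
    refine le_of_pow_le_pow_left₀ (n := 4) (by norm_num) (norm_nonneg _) ?_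
    have h8 : (a ^ 4 / T ^ 8) ^ 3 / (B * T) ≤ ‖riemannZeta s‖ ^ 4 := by
      rw [div_le_iff₀ (by positivity)]
      linarith
    refine le_trans ?_ h8
    have e3 : (a ^ 4 / T ^ 8) ^ 3 / (B * T) = a ^ 12 / (B * T ^ 25) := by
      field_simp
    have e4 : (a ^ 3 / B / T ^ 7) ^ 4 = a ^ 12 / (B ^ 4 * T ^ 28) := by
      field_simp
    rw [e3, e4]
    gcongr
    · exact le_self_pow₀ hB1 (by norm_num)
    · norm_num
  refine ⟨a ^ 4, by positivity, ?_, ?_⟩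
  · have : a ^ 4 ≤ a := pow_le_of_le_one ha0.le (by linarith) (by norm_num)
    linarith
  intro s ht hs hs3
  set T : ℝ := |s.im| ^ (1/50 : ℝ) with hT
  have hT1 : 1 ≤ T := Real.one_le_rpow ht (by norm_num)
  have hηle : a ^ 4 / T ^ 8 ≤ 1/200 := by
    have : a ^ 4 ≤ a := pow_le_of_le_one ha0.le (by linarith) (by norm_num)
    have h2 : a ^ 4 / T ^ 8 ≤ a ^ 4 := div_le_self (by positivity) (one_le_pow₀ hT1)
    linarith
  have hfin : a ^ 4 / T ^ 7 ≤ a ^ 3 / B / T ^ 7 - C * T * (2 * (a ^ 4 / T ^ 8)) := by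
    have : a ^ 3 / B / T ^ 7 - C * T * (2 * (a ^ 4 / T ^ 8)) =
        (a ^ 3 / B - 2 * C * a ^ 4) / T ^ 7 := by
      field_simp
    rw [this]
    gcongr
    have : a ^ 3 / B = 200 * C * a ^ 4 := by
      have : 200 * C * B * a = 1 := by rw [ha]; field_simp
      rw [div_eq_iff (by positivity)]
      linear_combination (-a ^ 3) * this
    rw [this]
    have : 0 < a ^ 4 := by positivity
    nlinarith
  rcases le_total (1 + a ^ 4 / T ^ 8) s.re with h1 | h1
  · refine le_trans ?_ (key s ht hs3 h1)
    refine hfin.trans ?_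
    have : 0 ≤ C * T * (2 * (a ^ 4 / T ^ 8)) := by positivity
    linarith
  · set w : ℂ := ⟨1 + a ^ 4 / T ^ 8, s.im⟩ with hw
    have hη0 : 0 < a ^ 4 / T ^ 8 := by positivity
    have h2 := key w ht (by simp [hw]; linarith) le_rfl
    have h3 : ‖riemannZeta s - riemannZeta w‖ ≤ C * T * ‖s - w‖ := by
      refine Convex.norm_image_sub_le_of_norm_deriv_le (𝕜 := ℂ) (f := riemannZeta)
        (s := {z : ℂ | 1 - 1/200 ≤ z.re} ∩ {z : ℂ | z.re ≤ 3} ∩ ({z : ℂ | s.im ≤ z.im} ∩ {z : ℂ | z.im ≤ s.im}))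
        ?_ ?_ ?_ ?_ ?_
      · intro z hz
        apply differentiableAt_riemannZeta
        rintro rfl
        have : s.im = 0 := le_antisymm hz.2.1 hz.2.2
        norm_num [this] at ht
      · intro z hz
        have : z.im = s.im := le_antisymm hz.2.2 hz.2.1
        have h5 := (h z hz.1.1 hz.1.2 (by rw [this]; exact ht)).2
        rwa [this] at h5
      · exact ((convex_halfSpace_re_ge _).inter (convex_halfSpace_re_le _)).inter
          ((convex_halfSpace_im_ge _).inter (convex_halfSpace_im_le _))
      · refine ⟨⟨?_, ?_⟩, ?_, ?_⟩ <;> simp [hw] <;> linarith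
      · refine ⟨⟨?_, ?_⟩, ?_, ?_⟩ <;> simp <;> linarith
    have h4 : ‖s - w‖ ≤ 2 * (a ^ 4 / T ^ 8) := by
      refine (Complex.norm_le_abs_re_add_abs_im _).trans ?_
      simp only [hw, Complex.sub_re, Complex.sub_im, sub_self, abs_zero, add_zero]
      rw [abs_le]
      constructor <;> linarith
    have h5 : ‖riemannZeta w‖ ≤ ‖riemannZeta s‖ + ‖riemannZeta s - riemannZeta w‖ := by
      exact norm_le_norm_add_norm_sub _ _
    have h6 : C * T * ‖s - w‖ ≤ C * T * (2 * (a ^ 4 / T ^ 8)) := by gcongr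
    have h7 : |w.im| ^ (1/50 : ℝ) = T := by simp [hw, hT]
    rw [h7] at h2
    linarith
end

section
open Finset

/-- The entire-near-one version of `1 / ζ`. -/
noncomputable def Rfun (s : ℂ) : ℂ := (s - 1) / riemannZeta₁ s

lemma zeta1_ne_zero {s : ℂ} (hs : 1 ≤ s.re) : riemannZeta₁ s ≠ 0 := by
  by_cases h : s = 1
  · subst h
    simp
  · intro h0
    apply riemannZeta_ne_zero_of_one_le_re hs
    rw [riemannZeta_eq_inv_sub_mul h, h0, mul_zero]

lemma Rfun_eq {s : ℂ} (h : s ≠ 1) : Rfun s = (riemannZeta s)⁻¹ := by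
  rw [riemannZeta_eq_inv_sub_mul h, Rfun, mul_inv, inv_inv, div_eq_mul_inv]

lemma Rfun_eq_LSeries {s : ℂ} (hs : 1 < s.re) :
    LSeries (fun n ↦ (ArithmeticFunction.moebius n : ℂ)) s = Rfun s := by
  rw [Rfun_eq (by rintro rfl; simp at hs)]
  have := ArithmeticFunction.LSeries_zeta_mul_Lseries_moebius hs
  rw [ArithmeticFunction.LSeries_zeta_eq_riemannZeta hs] at this
  exact (inv_eq_of_mul_eq_one_right this).symm

lemma Rfun_analytic {s : ℂ} (hs : riemannZeta₁ s ≠ 0) : AnalyticAt ℂ Rfun s := by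
  unfold Rfun
  refine AnalyticAt.div (by fun_prop) ?_ hs
  exact (differentiable_riemannZeta₁.analyticAt s)

lemma Rfun_deriv_small : ∃ C : ℝ, ∀ s : ℂ, 1 ≤ s.re → s.re ≤ 2 → |s.im| ≤ 2 →
    ‖iteratedDeriv 4 Rfun s‖ ≤ C := by
  have hc : IsCompact (Set.Icc (1 : ℝ) 2 ×ℂ Set.Icc (-2 : ℝ) 2) :=
    isCompact_Icc.reProdIm isCompact_Icc
  obtain ⟨C, hC⟩ := hc.exists_bound_of_continuousOn (f := iteratedDeriv 4 Rfun) (by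
    intro s hs
    rw [iteratedDeriv_eq_iterate]
    exact ((Rfun_analytic (zeta1_ne_zero hs.1.1)).iterated_deriv 4).continuousAt.continuousWithinAt)
  exact ⟨C, fun s h1 h2 h3 ↦ hC s ⟨⟨h1, h2⟩, abs_le.mp h3⟩⟩

lemma Rfun_deriv_large : ∃ C : ℝ, ∀ s : ℂ, 1 ≤ s.re → s.re ≤ 2 → 2 ≤ |s.im| →
    ‖iteratedDeriv 4 Rfun s‖ ≤ C * |s.im| ^ (39/50 : ℝ) := by
  obtain ⟨c, hc, hc1, h⟩ := zeta_lower
  refine ⟨24 * (128 / c) * (512 / c) ^ 4, fun s hs hs2 ht ↦ ?_⟩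
  set T : ℝ := |s.im| ^ (1/50 : ℝ) with hT
  have hT1 : 1 ≤ T := Real.one_le_rpow (by linarith) (by norm_num)
  have hT39 : |s.im| ^ (39/50 : ℝ) = T ^ 39 := by
    rw [hT, ← Real.rpow_natCast, ← Real.rpow_mul (abs_nonneg _)]
    norm_num
  set r : ℝ := c / (512 * T ^ 8) with hr
  have hr0 : 0 < r := by positivity
  have hr1 : r ≤ 1/200 := by
    have : r ≤ c := div_le_self hc.le (by nlinarith [one_le_pow₀ hT1 (n := 8)])
    linarith
  have main : ∀ z ∈ Metric.closedBall s r, z ≠ 1 ∧ riemannZeta z ≠ 0 ∧ ‖(riemannZeta z)⁻¹‖ ≤ 128 / c * T ^ 7 := by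
    intro z hz
    have hz' : ‖z - s‖ ≤ r := by simpa [dist_eq_norm] using hz
    have h1 := (Complex.abs_im_le_norm (z - s)).trans hz'
    have h2 := abs_le.mp ((Complex.abs_re_le_norm (z - s)).trans hz')
    simp only [Complex.sub_re, Complex.sub_im] at h1 h2
    have h3 : |z.im| ≤ 2 * |s.im| := by
      have := abs_sub_abs_le_abs_sub z.im s.im
      linarith
    have h3' : 1 ≤ |z.im| := by
      have := abs_sub_abs_le_abs_sub s.im z.im
      rw [abs_sub_comm] at this
      linarith
    set Tz : ℝ := |z.im| ^ (1/50 : ℝ) with hTz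
    have hTz1 : 1 ≤ Tz := Real.one_le_rpow (by linarith) (by norm_num)
    have h4 : Tz ≤ 2 * T := by
      calc _ ≤ (2 * |s.im|) ^ (1/50 : ℝ) := by rw [hTz]; gcongr
        _ = 2 ^ (1/50 : ℝ) * |s.im| ^ (1/50 : ℝ) := Real.mul_rpow (by norm_num) (by positivity)
        _ ≤ 2 ^ (1 : ℝ) * |s.im| ^ (1/50 : ℝ) := by
          gcongr <;> norm_num
        _ = _ := by rw [Real.rpow_one]
    have h5 : r ≤ c / Tz ^ 8 := by
      rw [hr]
      gcongr
      calc Tz ^ 8 ≤ (2 * T) ^ 8 := by gcongr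
        _ = 256 * T ^ 8 := by ring
        _ ≤ _ := by gcongr; norm_num
    have h6 := h z h3' (by linarith) (by linarith)
    have h7 : 0 < c / Tz ^ 7 := by positivity
    have h8 : 0 < ‖riemannZeta z‖ := lt_of_lt_of_le h7 h6
    refine ⟨?_, by simpa using h8, ?_⟩
    · rintro rfl
      norm_num at h3'
    · rw [norm_inv]
      calc _ ≤ (c / Tz ^ 7)⁻¹ := by gcongr
        _ = Tz ^ 7 / c := by rw [inv_div]
        _ ≤ (2 * T) ^ 7 / c := by gcongr
        _ = _ := by ring
  have := Complex.norm_iteratedDeriv_le_of_forall_mem_sphere_norm_le (f := Rfun) (c := s) (R := r)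
    (C := 128 / c * T ^ 7) 4 hr0 ?_ ?_
  · refine this.trans (le_of_eq ?_)
    rw [hT39, hr]
    simp [Nat.factorial]
    field_simp
  · refine DifferentiableOn.diffContOnCl ?_
    intro z hz
    rw [closure_ball _ hr0.ne'] at hz
    obtain ⟨h1, h2, h3⟩ := main z hz
    apply DifferentiableAt.differentiableWithinAt
    refine (Rfun_analytic ?_).differentiableAt
    intro h0
    apply h2
    rw [riemannZeta_eq_inv_sub_mul h1, h0, mul_zero]
  · intro z hz
    obtain ⟨h1, h2, h3⟩ := main z (Metric.sphere_subset_closedBall hz)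
    rw [Rfun_eq h1]
    exact h3

lemma logMul_iter (f : ℕ → ℂ) (k : ℕ) : LSeries.logMul^[k] f = fun n : ℕ ↦ (Real.log n : ℂ) ^ k * f n := by
  induction k with
  | zero => simp
  | succ k ih =>
    rw [Function.iterate_succ_apply', ih]
    funext n
    simp only [LSeries.logMul, Complex.natCast_log]
    ring

/-- Coefficients `μ(n) log^4 n`. -/
noncomputable def acoef (n : ℕ) : ℝ := (Real.log n) ^ 4 * (ArithmeticFunction.moebius n : ℝ)

lemma acoef_LSeries_bound : ∃ C : ℝ, 0 < C ∧ ∀ s : ℂ, 1 < s.re → s.re ≤ 2 →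
    ‖LSeries (fun n ↦ (acoef n : ℂ)) s‖ ≤ C * (1 + |s.im|) ^ (39/50 : ℝ) := by
  obtain ⟨C1, h1⟩ := Rfun_deriv_small
  obtain ⟨C2, h2⟩ := Rfun_deriv_large
  refine ⟨|C1| + |C2| + 1, by positivity, fun s hs hs2 ↦ ?_⟩
  have e : LSeries (fun n ↦ (acoef n : ℂ)) s = iteratedDeriv 4 Rfun s := by
    have e1 : (LSeries (fun n ↦ (ArithmeticFunction.moebius n : ℂ))) =ᶠ[nhds s] Rfun := by
      have : {z : ℂ | 1 < z.re} ∈ nhds s :=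
        (isOpen_lt continuous_const Complex.continuous_re).mem_nhds hs
      filter_upwards [this] with z hz using Rfun_eq_LSeries hz
    rw [← e1.iteratedDeriv_eq 4, LSeries_iteratedDeriv, logMul_iter]
    · norm_num
      congr 1
      funext n
      simp [acoef]
    · rw [ArithmeticFunction.abscissaOfAbsConv_moebius]
      exact_mod_cast hs
  rw [e]
  have h3 : 1 ≤ (1 + |s.im|) ^ (39/50 : ℝ) := Real.one_le_rpow (by linarith [abs_nonneg s.im]) (by norm_num)
  rcases le_total |s.im| 2 with h | h
  · calc _ ≤ C1 := h1 s hs.le hs2 h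
      _ ≤ |C1| * 1 := by rw [mul_one]; exact le_abs_self _
      _ ≤ _ := by
        gcongr
        linarith [abs_nonneg C2]
  · calc _ ≤ C2 * |s.im| ^ (39/50 : ℝ) := h2 s hs.le hs2 h
      _ ≤ |C2| * (1 + |s.im|) ^ (39/50 : ℝ) := by
        gcongr
        · exact le_abs_self _
        · linarith
      _ ≤ _ := by
        gcongr
        linarith [abs_nonneg C1]

lemma acoef_summable {s : ℂ} (hs : 1 < s.re) : LSeriesSummable (fun n ↦ (acoef n : ℂ)) s := by
  have := LSeriesSummable_of_abscissaOfAbsConv_lt_re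
    (f := LSeries.logMul^[4] (fun n ↦ (ArithmeticFunction.moebius n : ℂ))) (s := s) (by
      rw [LSeries.absicssaOfAbsConv_logPowMul, ArithmeticFunction.abscissaOfAbsConv_moebius]
      exact_mod_cast hs)
  rw [logMul_iter] at this
  convert this using 2
  simp [acoef]
end

section
open Finset MeasureTheory

/-- The smoothing kernel. -/
noncomputable def phiK : ℝ → ℂ := fun t ↦
  (Set.Ioc (0:ℝ) 1).indicator (fun _ ↦ (1 : ℂ)) t - (Set.Ioc (0:ℝ) 1).indicator (fun t : ℝ ↦ (t : ℂ) ^ (1 : ℂ)) t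

/-- Its Mellin transform. -/
noncomputable def kK (s : ℂ) : ℂ := 1 / s - 1 / (s + 1)

lemma phiK_mellin {s : ℂ} (hs : 0 < s.re) : HasMellin phiK s (kK s) := by
  have h1 := hasMellin_one_Ioc hs
  have h2 := hasMellin_cpow_Ioc 1 (s := s) (by simp; linarith)
  have h3 := hasMellin_sub h1.1 h2.1
  rw [h1.2, h2.2] at h3
  exact h3

lemma phiK_eq {t : ℝ} (ht : 0 < t) : phiK t = ((max (1 - t) 0 : ℝ) : ℂ) := by
  unfold phiK
  by_cases h : t ≤ 1
  · have hm : t ∈ Set.Ioc (0:ℝ) 1 := ⟨ht, h⟩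
    rw [Set.indicator_of_mem hm, Set.indicator_of_mem hm, max_eq_left (by linarith)]
    simp
  · rw [Set.indicator_of_notMem (fun h' ↦ h h'.2), Set.indicator_of_notMem (fun h' ↦ h h'.2),
      max_eq_right (by linarith)]
    simp

lemma phiK_cont {t : ℝ} (ht : 0 < t) : ContinuousAt phiK t := by
  have : ContinuousAt (fun t : ℝ ↦ ((max (1 - t) 0 : ℝ) : ℂ)) t := by fun_prop
  refine this.congr ?_
  filter_upwards [lt_mem_nhds ht] with z hz using (phiK_eq hz).symm

lemma kK_bound (σ u : ℝ) (hσ : 1 ≤ σ) : ‖kK (σ + u * Complex.I)‖ ≤ 4 * (1 + ‖u‖) ^ (-(2 : ℝ)) := by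
  set s : ℂ := σ + u * Complex.I with hs
  have hre : s.re = σ := by simp [hs]
  have him : s.im = u := by simp [hs]
  have h1 : (1 + ‖u‖) / 2 ≤ ‖s‖ := by
    have h1 := Complex.abs_re_le_norm s
    have h2 := Complex.abs_im_le_norm s
    rw [hre] at h1
    rw [him] at h2
    rw [Real.norm_eq_abs]
    have := le_abs_self σ
    linarith
  have h2 : (1 + ‖u‖) / 2 ≤ ‖s + 1‖ := by
    have h1 := Complex.abs_re_le_norm (s + 1)
    have h2 := Complex.abs_im_le_norm (s + 1)
    simp only [Complex.add_re, Complex.add_im, Complex.one_re, Complex.one_im, hre, him, add_zero] at h1 h2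
    rw [Real.norm_eq_abs]
    have := le_abs_self (σ + 1)
    linarith
  have hu : 0 ≤ ‖u‖ := norm_nonneg _
  have h3 : 0 < ‖s‖ := by linarith
  have h4 : 0 < ‖s + 1‖ := by linarith
  have e : kK s = 1 / (s * (s + 1)) := by
    have : s ≠ 0 := by simpa using h3
    have : s + 1 ≠ 0 := by simpa using h4
    unfold kK
    field_simp
    ring
  rw [e, norm_div, norm_mul, norm_one, Real.rpow_neg (by linarith)]
  rw [show (2 : ℝ) = ((2 : ℕ) : ℝ) by norm_num, Real.rpow_natCast]
  calc 1 / (‖s‖ * ‖s + 1‖) ≤ 1 / ((1 + ‖u‖) / 2 * ((1 + ‖u‖) / 2)) := by gcongr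
    _ = _ := by field_simp; norm_num

lemma kK_cont (σ : ℝ) (hσ : 1 ≤ σ) : Continuous (fun u : ℝ ↦ kK (σ + u * Complex.I)) := by
  unfold kK
  refine Continuous.sub (Continuous.div (by fun_prop) (by fun_prop) ?_) (Continuous.div (by fun_prop) (by fun_prop) ?_)
  · intro u h
    have := congrArg Complex.re h
    simp at this
    linarith
  · intro u h
    have := congrArg Complex.re h
    simp at this
    linarith

lemma kK_integrable (σ : ℝ) (hσ : 1 ≤ σ) : Integrable (fun u : ℝ ↦ kK (σ + u * Complex.I)) := by
  refine Integrable.mono' ((integrable_one_add_norm (E := ℝ) (μ := volume) (r := 2) (by simp)).const_mul 4)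
    (kK_cont σ hσ).aestronglyMeasurable (Filter.Eventually.of_forall fun u ↦ kK_bound σ u hσ)

lemma phiK_inv (σ : ℝ) (hσ : 1 ≤ σ) {y : ℝ} (hy : 0 < y) :
    ((1 / (2 * Real.pi) : ℝ) : ℂ) * ∫ u : ℝ, (y : ℂ) ^ (-((σ : ℂ) + u * Complex.I)) * kK (σ + u * Complex.I) =
      phiK y := by
  have hm : ∀ u : ℝ, mellin phiK (σ + u * Complex.I) = kK (σ + u * Complex.I) := fun u ↦
    (phiK_mellin (by simp; linarith)).2
  have := mellinInv_mellin_eq σ phiK hy (phiK_mellin (by simp; linarith)).1 (by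
    unfold Complex.VerticalIntegrable
    simp_rw [hm]
    exact kK_integrable σ hσ) (phiK_cont hy)
  unfold mellinInv at this
  simp_rw [hm] at this
  rw [← this, Complex.real_smul]
  simp_rw [smul_eq_mul]

lemma perron_bound : ∃ C : ℝ, 0 < C ∧ ∀ N : ℕ, 3 ≤ N →
    |∑ n ∈ range (N + 1), acoef n * (1 - (n : ℝ) / N)| ≤ C * N := by
  obtain ⟨C, hC, h⟩ := acoef_LSeries_bound
  set I : ℝ := ∫ u : ℝ, (1 + ‖u‖) ^ (-(61/50) : ℝ) with hI
  have hI0 : 0 ≤ I := integral_nonneg fun u ↦ by positivity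
  refine ⟨3 * (C * 4) * I + 1, by positivity, fun N hN ↦ ?_⟩
  have hNpos : (0 : ℝ) < N := by positivity
  have hlog : 1 ≤ Real.log N := by
    rw [Real.le_log_iff_exp_le hNpos]
    have : (3 : ℝ) ≤ N := by exact_mod_cast hN
    linarith [Real.exp_one_lt_d9]
  set σ : ℝ := 1 + 1 / Real.log N with hσ
  have hσ1 : 1 < σ := by
    have : 0 < 1 / Real.log N := by positivity
    linarith
  have hσ2 : σ ≤ 2 := by
    have : 1 / Real.log N ≤ 1 := by rw [div_le_one (by linarith)]; exact hlog
    linarith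
  have hNσ : (N : ℝ) ^ σ ≤ 3 * N := by
    rw [hσ, Real.rpow_add hNpos, Real.rpow_one, Real.rpow_def_of_pos hNpos]
    rw [mul_one_div_cancel (by linarith)]
    nlinarith [Real.exp_one_lt_d9]
  -- the integrands
  set F : ℕ → ℝ → ℂ := fun n u ↦
    LSeries.term (fun n ↦ (acoef n : ℂ)) (σ + u * Complex.I) n *
      ((N : ℂ) ^ ((σ : ℂ) + u * Complex.I) * kK (σ + u * Complex.I)) with hF
  have hre : ∀ u : ℝ, ((σ : ℂ) + u * Complex.I).re = σ := by intro u; simp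
  have him : ∀ u : ℝ, ((σ : ℂ) + u * Complex.I).im = u := by intro u; simp
  have hNnorm : ∀ u : ℝ, ‖(N : ℂ) ^ ((σ : ℂ) + u * Complex.I)‖ = (N : ℝ) ^ σ := by
    intro u
    rw [Complex.norm_natCast_cpow_of_pos (by omega), hre]
  have hFform : ∀ n : ℕ, 1 ≤ n → ∀ u, F n u = acoef n * ((((n : ℝ) / N : ℝ) : ℂ) ^ (-((σ : ℂ) + u * Complex.I)) *
      kK (σ + u * Complex.I)) := by
    intro n hn u
    have hn0 : (n : ℂ) ≠ 0 := by exact_mod_cast (by omega : n ≠ 0)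
    simp only [hF]
    rw [LSeries.term_of_ne_zero (by omega)]
    have : (((n : ℝ) / N : ℝ) : ℂ) ^ (-((σ : ℂ) + u * Complex.I)) =
        (N : ℂ) ^ ((σ : ℂ) + u * Complex.I) / (n : ℂ) ^ ((σ : ℂ) + u * Complex.I) := by
      rw [Complex.cpow_neg, Complex.ofReal_div, Complex.div_cpow_ofReal_nonneg (by positivity) (by positivity), inv_div]
      simp
    rw [this]
    ring
  have hFint : ∀ n, ((1 / (2 * Real.pi) : ℝ) : ℂ) * ∫ u, F n u = acoef n * phiK ((n : ℝ) / N) := by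
    intro n
    rcases Nat.eq_zero_or_pos n with rfl | hn
    · simp [hF, acoef]
    · simp_rw [hFform n hn]
      rw [integral_const_mul, ← phiK_inv σ hσ1.le (by positivity : 0 < (n : ℝ) / N)]
      ring
  have hFnorm : ∀ n u, ‖F n u‖ = ‖LSeries.term (fun n ↦ (acoef n : ℂ)) σ n‖ *
      ((N : ℝ) ^ σ * ‖kK (σ + u * Complex.I)‖) := by
    intro n u
    simp only [hF]
    rw [norm_mul, norm_mul, hNnorm]
    congr 1
    rw [LSeries.norm_term_eq, LSeries.norm_term_eq, hre]
    simp
  have hFI : ∀ n, Integrable (F n) := by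
    intro n
    refine Integrable.mono' (((kK_integrable σ hσ1.le).norm.const_mul ((N : ℝ) ^ σ)).const_mul
      ‖LSeries.term (fun n ↦ (acoef n : ℂ)) σ n‖) ?_ (Filter.Eventually.of_forall fun u ↦ (hFnorm n u).le)
    apply Continuous.aestronglyMeasurable
    have hN0 : (N : ℂ) ≠ 0 := by exact_mod_cast (by omega : N ≠ 0)
    have c2 : Continuous fun u : ℝ ↦ (N : ℂ) ^ ((σ : ℂ) + u * Complex.I) :=
      Continuous.const_cpow (by fun_prop) (Or.inl hN0)
    refine Continuous.mul ?_ (c2.mul (kK_cont σ hσ1.le))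
    rcases Nat.eq_zero_or_pos n with rfl | hn
    · simp only [LSeries.term_zero]; fun_prop
    · have hn0 : (n : ℂ) ≠ 0 := by exact_mod_cast (by omega : n ≠ 0)
      simp only [LSeries.term_of_ne_zero (by omega : n ≠ 0)]
      have c3 : Continuous fun u : ℝ ↦ (n : ℂ) ^ ((σ : ℂ) + u * Complex.I) :=
        Continuous.const_cpow (by fun_prop) (Or.inl hn0)
      exact Continuous.div (by fun_prop) c3 (fun u ↦ by simp [Complex.cpow_eq_zero_iff, hn0])
  have hsumm : Summable fun n ↦ ∫ u, ‖F n u‖ := by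
    simp_rw [hFnorm, integral_const_mul]
    exact Summable.mul_right _ (acoef_summable (by simpa using hσ1)).norm
  have hS := (hasSum_integral_of_summable_integral_norm hFI hsumm).mul_left ((1 / (2 * Real.pi) : ℝ) : ℂ)
  simp_rw [hFint] at hS
  have hfin : HasSum (fun n : ℕ ↦ (acoef n : ℂ) * phiK ((n : ℝ) / N))
      ((∑ n ∈ range (N + 1), acoef n * (1 - (n : ℝ) / N) : ℝ) : ℂ) := by
    have : ((∑ n ∈ range (N + 1), acoef n * (1 - (n : ℝ) / N) : ℝ) : ℂ) =
      ∑ n ∈ range (N + 1), (acoef n : ℂ) * phiK ((n : ℝ) / N) := by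
      rw [Complex.ofReal_sum]
      refine Finset.sum_congr rfl fun n hn ↦ ?_
      rcases Nat.eq_zero_or_pos n with rfl | hn0
      · simp [acoef]
      · rw [phiK_eq (by positivity), max_eq_left]
        · push_cast; ring
        · have : (n : ℝ) ≤ N := by exact_mod_cast (Nat.lt_succ_iff.mp (Finset.mem_range.mp hn))
          rw [sub_nonneg, div_le_one hNpos]
          exact this
    rw [this]
    refine hasSum_sum_of_ne_finset_zero fun n hn ↦ ?_
    have hn' : N < n := by simpa using hn
    have h3 : (N : ℝ) < n := by exact_mod_cast hn'
    have h4 : 0 < (n : ℝ) := by linarith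
    rw [phiK_eq (by positivity), max_eq_right]
    · simp
    · rw [sub_nonpos, one_le_div hNpos]
      exact h3.le
  have heq := hfin.unique hS
  have hnorm : |∑ n ∈ range (N + 1), acoef n * (1 - (n : ℝ) / N)| =
      ‖((∑ n ∈ range (N + 1), acoef n * (1 - (n : ℝ) / N) : ℝ) : ℂ)‖ := by
    rw [Complex.norm_real, Real.norm_eq_abs]
  rw [hnorm, heq, norm_mul]
  have hb : ‖∫ u, ∑' n, F n u‖ ≤ ∫ u : ℝ, (3 * N * (C * 4)) * (1 + ‖u‖) ^ (-(61/50) : ℝ) := by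
    refine norm_integral_le_of_norm_le ?_ (Filter.Eventually.of_forall fun u ↦ ?_)
    · exact (integrable_one_add_norm (E := ℝ) (μ := volume) (r := 61/50) (by simp; norm_num)).const_mul _
    · simp only [hF]
      rw [tsum_mul_right, norm_mul, norm_mul, hNnorm]
      have h1 := h (σ + u * Complex.I) (by rw [hre]; exact hσ1) (by rw [hre]; exact hσ2)
      rw [him] at h1
      have hu : (0 : ℝ) < 1 + ‖u‖ := by positivity
      change ‖LSeries (fun n ↦ (acoef n : ℂ)) (σ + u * Complex.I)‖ * _ ≤ _
      calc _ ≤ (C * (1 + |u|) ^ (39/50 : ℝ)) * ((3 * N) * (4 * (1 + ‖u‖) ^ (-(2 : ℝ)))) := by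
            gcongr
            exact kK_bound σ u hσ1.le
        _ = _ := by
            rw [show (-(61/50) : ℝ) = 39/50 + (-2) by norm_num, Real.rpow_add hu, Real.norm_eq_abs]
            ring
  rw [integral_const_mul, ← hI] at hb
  have hpi : ‖((1 / (2 * Real.pi) : ℝ) : ℂ)‖ ≤ 1 := by
    rw [Complex.norm_real, Real.norm_eq_abs, abs_of_pos (by positivity), div_le_one (by positivity)]
    linarith [Real.pi_gt_three]
  calc _ ≤ 1 * (3 * N * (C * 4) * I) := by gcongr
    _ ≤ _ := by nlinarith
end

section
open Finset

lemma abel_ineq (w b : ℕ → ℝ) (B : ℝ) (hw : ∀ i, w (i + 1) ≤ w i) (hw0 : ∀ i, 0 ≤ w i) (n : ℕ)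
    (hb : ∀ k ≤ n, |∑ i ∈ range k, b i| ≤ B) : |∑ i ∈ range n, w i * b i| ≤ B * w 0 := by
  have key : ∀ k, k + 1 ≤ n → |∑ i ∈ range (k + 1), w i * b i - w k * ∑ i ∈ range (k + 1), b i|
      ≤ B * (w 0 - w k) := by
    intro k
    induction k with
    | zero => simp
    | succ k ih =>
      intro hk
      have h1 := ih (by omega)
      have h2 := hb (k + 1) (by omega)
      have e : ∑ i ∈ range (k + 1 + 1), w i * b i - w (k + 1) * ∑ i ∈ range (k + 1 + 1), b i =
        (∑ i ∈ range (k + 1), w i * b i - w k * ∑ i ∈ range (k + 1), b i) +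
          (w k - w (k + 1)) * ∑ i ∈ range (k + 1), b i := by
        rw [sum_range_succ _ (k + 1), sum_range_succ _ (k + 1)]
        ring
      rw [e]
      have h3 : |(w k - w (k + 1)) * ∑ i ∈ range (k + 1), b i| ≤ (w k - w (k + 1)) * B := by
        rw [abs_mul, abs_of_nonneg (by linarith [hw k])]
        exact mul_le_mul_of_nonneg_left h2 (by linarith [hw k])
      refine (abs_add_le _ _).trans ?_
      linarith
  have hB : 0 ≤ B := by simpa using hb 0 (Nat.zero_le _)
  rcases n with _ | n
  · simpa using mul_nonneg hB (hw0 0)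
  · have h1 := key n le_rfl
    have h2 := hb (n + 1) le_rfl
    have h3 : |w n * ∑ i ∈ range (n + 1), b i| ≤ w n * B := by
      rw [abs_mul, abs_of_nonneg (hw0 n)]
      exact mul_le_mul_of_nonneg_left h2 (hw0 n)
    have := abs_add_le (∑ i ∈ range (n + 1), w i * b i - w n * ∑ i ∈ range (n + 1), b i)
      (w n * ∑ i ∈ range (n + 1), b i)
    rw [sub_add_cancel] at this
    linarith

lemma acoef_abs_le (n N : ℕ) (hn : n ≤ N) : |acoef n| ≤ (Real.log N) ^ 4 := by
  unfold acoef
  rcases Nat.eq_zero_or_pos n with rfl | h0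
  · simp; positivity
  rw [abs_mul]
  have h1 : |(ArithmeticFunction.moebius n : ℝ)| ≤ 1 := by
    exact_mod_cast ArithmeticFunction.abs_moebius_le_one (n := n)
  have h2 : 0 ≤ Real.log n := Real.log_natCast_nonneg n
  have h3 : Real.log n ≤ Real.log N := Real.log_le_log (by positivity) (by exact_mod_cast hn)
  rw [abs_of_nonneg (by positivity)]
  calc _ ≤ Real.log N ^ 4 * 1 := by gcongr
    _ = _ := mul_one _

lemma log_ge_one_of_three {N : ℕ} (hN : 3 ≤ N) : 1 ≤ Real.log N := by
  have : (3 : ℝ) ≤ N := by exact_mod_cast hN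
  rw [Real.le_log_iff_exp_le (by linarith)]
  linarith [Real.exp_one_lt_d9]

lemma log_sq_le (N : ℕ) (hN : 1 ≤ N) : Real.log N ^ 2 ≤ 16 * Real.sqrt N := by
  have h0 : (0:ℝ) < N := by positivity
  have h1 : Real.log N = 4 * Real.log (Real.sqrt (Real.sqrt N)) := by
    rw [Real.log_sqrt (by positivity), Real.log_sqrt (by positivity)]
    ring
  have h2 : Real.log (Real.sqrt (Real.sqrt N)) ≤ Real.sqrt (Real.sqrt N) := by
    have := Real.log_le_sub_one_of_pos (x := Real.sqrt (Real.sqrt N)) (by positivity)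
    linarith
  have h3 : 0 ≤ Real.log N := Real.log_natCast_nonneg N
  have h4 : Real.log N ≤ 4 * Real.sqrt (Real.sqrt N) := by linarith
  calc _ ≤ (4 * Real.sqrt (Real.sqrt N)) ^ 2 := by gcongr
    _ = 16 * Real.sqrt N := by rw [mul_pow, Real.sq_sqrt (by positivity)]; norm_num

lemma acoef_sum_bound : ∃ C : ℝ, 0 < C ∧ ∀ N : ℕ, 3 ≤ N →
    |∑ n ∈ range (N + 1), acoef n| ≤ C * N * Real.log N ^ 2 := by
  obtain ⟨C, hC, h⟩ := perron_bound
  have hT : ∀ N : ℕ, 3 ≤ N → |∑ n ∈ range (N + 1), acoef n * ((N : ℝ) - n)| ≤ C * N ^ 2 := by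
    intro N hN
    have hN0 : (0 : ℝ) < N := by positivity
    have e : ∑ n ∈ range (N + 1), acoef n * ((N : ℝ) - n) =
        N * ∑ n ∈ range (N + 1), acoef n * (1 - (n : ℝ) / N) := by
      rw [mul_sum]
      refine sum_congr rfl fun n _ ↦ ?_
      field_simp
    rw [e, abs_mul, abs_of_pos hN0]
    calc _ ≤ N * (C * N) := by gcongr; exact h N hN
      _ = _ := by ring
  refine ⟨5 * C + 1280, by positivity, fun N hN ↦ ?_⟩
  have hL := log_ge_one_of_three hN
  set L : ℝ := Real.log N with hLdef
  have hN0 : (0 : ℝ) < N := by positivity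
  have hL2 : 0 < L ^ 2 := by positivity
  set k : ℕ := ⌈(N : ℝ) / L ^ 2⌉₊ with hk
  have hk1 : (N : ℝ) / L ^ 2 ≤ k := Nat.le_ceil _
  have hk2 : (k : ℝ) < (N : ℝ) / L ^ 2 + 1 := Nat.ceil_lt_add_one (by positivity)
  have hkN : k ≤ N := by
    apply Nat.ceil_le.mpr
    exact div_le_self hN0.le (one_le_pow₀ hL)
  have hk0 : (0 : ℝ) < k := lt_of_lt_of_le (by positivity) hk1
  have hLN : L ^ 2 ≤ 16 * N := by
    refine (log_sq_le N (by omega)).trans ?_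
    gcongr
    rw [Real.sqrt_le_left hN0.le]
    have : (1 : ℝ) ≤ N := by exact_mod_cast (by omega : 1 ≤ N)
    nlinarith
  have hk3 : (k : ℝ) ≤ 17 * (N / L ^ 2) := by
    have : 1 ≤ 16 * ((N : ℝ) / L ^ 2) := by
      rw [← mul_div_assoc, le_div_iff₀ hL2]
      linarith
    linarith
  have e : (k : ℝ) * ∑ n ∈ range (N + 1), acoef n =
      ∑ n ∈ range (N + k + 1), acoef n * (((N + k : ℕ) : ℝ) - n) -
      ∑ n ∈ range (N + 1), acoef n * ((N : ℝ) - n) -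
      ∑ n ∈ Ico (N + 1) (N + k + 1), acoef n * (((N + k : ℕ) : ℝ) - n) := by
    rw [← sum_range_add_sum_Ico _ (by omega : N + 1 ≤ N + k + 1), mul_sum]
    rw [add_sub_right_comm, add_sub_cancel_right, ← sum_sub_distrib]
    refine sum_congr rfl fun n _ ↦ ?_
    push_cast
    ring
  have hlog2 : Real.log ((N + k : ℕ) : ℝ) ≤ 2 * L := by
    have : Real.log ((N + k : ℕ) : ℝ) ≤ Real.log ((N : ℝ) * N) := by
      apply Real.log_le_log
      · exact_mod_cast (by omega : 0 < N + k)
      · exact_mod_cast (by nlinarith : N + k ≤ N * N)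
    rw [Real.log_mul hN0.ne' hN0.ne'] at this
    linarith
  have hE : |∑ n ∈ Ico (N + 1) (N + k + 1), acoef n * (((N + k : ℕ) : ℝ) - n)| ≤ k * (((2 * L) ^ 4) * k) := by
    refine (abs_sum_le_sum_abs _ _).trans ?_
    have : ∀ n ∈ Ico (N + 1) (N + k + 1), |acoef n * (((N + k : ℕ) : ℝ) - n)| ≤ (2 * L) ^ 4 * k := by
      intro n hn
      rw [mem_Ico] at hn
      have h1 : (n : ℝ) ≤ ((N + k : ℕ) : ℝ) := by exact_mod_cast (by omega : n ≤ N + k)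
      have h2 : (N : ℝ) ≤ n := by exact_mod_cast (by omega : N ≤ n)
      rw [abs_mul, abs_of_nonneg (sub_nonneg.mpr h1)]
      have h3 := acoef_abs_le n (N + k) (by omega)
      have h4 : 0 ≤ Real.log ((N + k : ℕ) : ℝ) := Real.log_natCast_nonneg _
      gcongr
      · exact h3.trans (by gcongr)
      · push_cast; linarith
    refine (sum_le_sum this).trans (le_of_eq ?_)
    rw [sum_const, Nat.card_Ico, nsmul_eq_mul]
    congr 2
    omega
  have h1 := hT (N + k) (by omega)
  have h2 := hT N hN
  have h3 : |(k : ℝ) * ∑ n ∈ range (N + 1), acoef n| ≤ C * ((N + k : ℕ) : ℝ) ^ 2 + C * N ^ 2 + k * (((2 * L) ^ 4) * k) := by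
    rw [e]
    refine (abs_sub _ _).trans ?_
    refine add_le_add ((abs_sub _ _).trans (add_le_add h1 h2)) hE
  have h4 : ((N + k : ℕ) : ℝ) ≤ 2 * N := by exact_mod_cast (by omega : N + k ≤ 2 * N)
  rw [abs_mul, abs_of_pos hk0] at h3
  have h5 : (k : ℝ) * |∑ n ∈ range (N + 1), acoef n| ≤ k * (5 * C * N * L ^ 2 + 16 * L ^ 4 * k) := by
    refine h3.trans ?_
    have h6 : (N : ℝ) ≤ k * L ^ 2 := by rwa [div_le_iff₀ hL2] at hk1
    calc _ ≤ C * (2 * N) ^ 2 + C * N ^ 2 + k * (((2 * L) ^ 4) * k) := by gcongr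
      _ = 5 * C * N * N + k * (((2 * L) ^ 4) * k) := by ring
      _ ≤ 5 * C * N * (k * L ^ 2) + k * (((2 * L) ^ 4) * k) := by gcongr
      _ = _ := by ring
  have h7 := le_of_mul_le_mul_left h5 hk0
  refine h7.trans ?_
  calc 5 * C * N * L ^ 2 + 16 * L ^ 4 * k ≤ 5 * C * N * L ^ 2 + 16 * L ^ 4 * (17 * (N / L ^ 2)) := by gcongr
    _ = (5 * C + 272) * N * L ^ 2 := by field_simp; ring
    _ ≤ _ := by gcongr; norm_num

lemma moebius_sum_trivial (N : ℕ) : |∑ n ∈ range (N + 1), (ArithmeticFunction.moebius n : ℝ)| ≤ N := by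
  rw [sum_range_succ']
  simp only [ArithmeticFunction.map_zero, Int.cast_zero, add_zero]
  refine (abs_sum_le_sum_abs _ _).trans ?_
  refine (sum_le_sum (g := fun _ ↦ (1 : ℝ)) fun i _ ↦ ?_).trans (by simp)
  exact_mod_cast ArithmeticFunction.abs_moebius_le_one (n := i + 1)

lemma moebius_sum_bound1 : ∃ C : ℝ, 0 < C ∧ ∀ N : ℕ, 16 ≤ N →
    |∑ n ∈ range (N + 1), (ArithmeticFunction.moebius n : ℝ)| ≤ C * N / Real.log N ^ 2 := by
  obtain ⟨C, hC, h⟩ := acoef_sum_bound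
  refine ⟨16 + 32 * C, by positivity, fun N hN ↦ ?_⟩
  have hL := log_ge_one_of_three (by omega : 3 ≤ N)
  set L : ℝ := Real.log N with hLdef
  have hN0 : (0 : ℝ) < N := by positivity
  set m := Nat.sqrt N with hm
  have hm4 : 4 ≤ m := Nat.le_sqrt.mpr (by omega)
  have hmN : m ≤ N := Nat.sqrt_le_self N
  have hmN2 : N < (m + 1) * (m + 1) := Nat.lt_succ_sqrt N
  have hlogm : L / 2 ≤ Real.log ((m + 1 : ℕ) : ℝ) := by
    have : Real.log N ≤ Real.log (((m + 1 : ℕ) : ℝ) * ((m + 1 : ℕ) : ℝ)) :=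
      Real.log_le_log hN0 (by exact_mod_cast hmN2.le)
    rw [Real.log_mul (by positivity) (by positivity)] at this
    linarith
  have hsqrt : (m : ℝ) ≤ 16 * (N / L ^ 2) := by
    have h1 : (m : ℝ) ≤ Real.sqrt N := Real.nat_sqrt_le_real_sqrt
    have h2 := log_sq_le N (by omega)
    rw [← mul_div_assoc, le_div_iff₀ (by positivity)]
    calc (m : ℝ) * L ^ 2 ≤ Real.sqrt N * (16 * Real.sqrt N) := by gcongr
      _ = 16 * (Real.sqrt N * Real.sqrt N) := by ring
      _ = 16 * N := by rw [Real.mul_self_sqrt hN0.le]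
  have hbd : ∀ j : ℕ, 3 ≤ j → j ≤ N → |∑ n ∈ range (j + 1), acoef n| ≤ C * N * L ^ 2 := by
    intro j hj hjN
    refine (h j hj).trans ?_
    have : 0 ≤ Real.log j := Real.log_natCast_nonneg j
    have hj' : (j : ℝ) ≤ N := by exact_mod_cast hjN
    have : Real.log j ≤ L := Real.log_le_log (by positivity) hj'
    gcongr
  have habel := abel_ineq (fun i ↦ 1 / Real.log ((m + 1 + i : ℕ) : ℝ) ^ 4) (fun i ↦ acoef (m + 1 + i))
    (2 * (C * N * L ^ 2)) ?_ ?_ (N - m) ?_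
  · rw [← sum_range_add_sum_Ico _ (by omega : m + 1 ≤ N + 1)]
    rw [sum_Ico_eq_sum_range]
    have e : N + 1 - (m + 1) = N - m := by omega
    rw [e]
    have e2 : ∑ k ∈ range (N - m), (ArithmeticFunction.moebius (m + 1 + k) : ℝ) =
      ∑ i ∈ range (N - m), 1 / Real.log ((m + 1 + i : ℕ) : ℝ) ^ 4 * acoef (m + 1 + i) := by
      refine sum_congr rfl fun i _ ↦ ?_
      have := log_ge_one_of_three (by omega : 3 ≤ m + 1 + i)
      unfold acoef
      field_simp
    rw [e2]
    refine (abs_add_le _ _).trans ((add_le_add (moebius_sum_trivial m) habel).trans ?_)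
    have h5 : 1 / Real.log ((m + 1 + 0 : ℕ) : ℝ) ^ 4 ≤ 16 / L ^ 4 := by
      rw [add_zero]
      calc _ ≤ 1 / (L / 2) ^ 4 := by gcongr
        _ = _ := by field_simp; norm_num
    calc _ ≤ 16 * (N / L ^ 2) + 2 * (C * N * L ^ 2) * (16 / L ^ 4) := by gcongr
      _ = _ := by field_simp; ring
  · intro i
    have := log_ge_one_of_three (by omega : 3 ≤ m + 1 + i)
    have h2 : Real.log ((m + 1 + i : ℕ) : ℝ) ≤ Real.log ((m + 1 + (i + 1) : ℕ) : ℝ) :=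
      Real.log_le_log (by positivity) (by exact_mod_cast (by omega))
    apply one_div_le_one_div_of_le (by positivity)
    gcongr
  · intro i
    positivity
  · intro k hk
    have e : ∑ i ∈ range k, acoef (m + 1 + i) =
        ∑ n ∈ range (m + k + 1), acoef n - ∑ n ∈ range (m + 1), acoef n := by
      rw [← sum_range_add_sum_Ico _ (by omega : m + 1 ≤ m + k + 1), sum_Ico_eq_sum_range]
      have e : m + k + 1 - (m + 1) = k := by omega
      rw [e]
      ring
    rw [e]
    refine (abs_sub _ _).trans ?_
    have h1 := hbd (m + k) (by omega) (by omega)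
    have h2 := hbd m (by omega) (by omega)
    linarith

lemma moebius_sum_bound : ∃ C : ℝ, 0 < C ∧ ∀ N : ℕ, 1 ≤ N →
    |∑ n ∈ range (N + 1), (ArithmeticFunction.moebius n : ℝ)| ≤
      C * (2 ^ (Nat.log 2 N) / ((Nat.log 2 N : ℝ) + 1) ^ 2) := by
  obtain ⟨C, hC, h⟩ := moebius_sum_bound1
  refine ⟨32 * C + 1000, by positivity, fun N hN ↦ ?_⟩
  set j := Nat.log 2 N with hj
  have hj1 : 2 ^ j ≤ N := Nat.pow_log_le_self 2 (by omega)
  have hj2 : N < 2 ^ (j + 1) := Nat.lt_pow_succ_log_self (by norm_num) N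
  have hj2' : (N : ℝ) ≤ 2 * 2 ^ j := by
    have : (N : ℝ) ≤ 2 ^ (j + 1) := by exact_mod_cast hj2.le
    rw [pow_succ] at this
    linarith
  have hp : (0 : ℝ) < 2 ^ j := by positivity
  rcases le_or_gt 16 N with h16 | h16
  · have hj4 : 1 ≤ j := by
      by_contra h0
      have : j = 0 := by omega
      rw [this] at hj2
      omega
    have hlog : ((j : ℝ) + 1) / 4 ≤ Real.log N := by
      have h1 : Real.log (2 ^ j) ≤ Real.log N := Real.log_le_log (by positivity) (by exact_mod_cast hj1)
      rw [Real.log_pow] at h1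
      have h2 := Real.log_two_gt_d9
      have h3 : (1 : ℝ) ≤ j := by exact_mod_cast hj4
      nlinarith
    refine (h N h16).trans ?_
    calc C * N / Real.log N ^ 2 ≤ C * (2 * 2 ^ j) / (((j : ℝ) + 1) / 4) ^ 2 := by gcongr
      _ = (32 * C) * (2 ^ j / ((j : ℝ) + 1) ^ 2) := by field_simp; norm_num
      _ ≤ _ := by
        gcongr
        linarith
  · refine (moebius_sum_trivial N).trans ?_
    have hj3 : j ≤ 3 := by
      by_contra h0
      have : 2 ^ 4 ≤ 2 ^ j := Nat.pow_le_pow_right (by norm_num) (by omega)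
      omega
    have hj3' : (j : ℝ) ≤ 3 := by exact_mod_cast hj3
    have hj0 : (0 : ℝ) ≤ j := by positivity
    rw [← mul_div_assoc, le_div_iff₀ (by positivity)]
    calc (N : ℝ) * ((j : ℝ) + 1) ^ 2 ≤ (2 * 2 ^ j) * (3 + 1) ^ 2 := by gcongr
      _ = 32 * 2 ^ j := by ring
      _ ≤ _ := by
        gcongr
        linarith
end

section
open Finset

lemma sum_vonMangoldt_div_le (N : ℕ) (hN : 1 ≤ N) :
    ∑ n ∈ Ioc 0 N, ArithmeticFunction.vonMangoldt n / n ≤ 2 * Real.log N := by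
  have h := ArithmeticFunction.sum_Ioc_mul_zeta_eq_sum (R := ℝ) ArithmeticFunction.vonMangoldt N
  rw [ArithmeticFunction.vonMangoldt_mul_zeta] at h
  have hN0 : (0 : ℝ) < N := by exact_mod_cast hN
  have h1 : ∑ n ∈ Ioc 0 N, ArithmeticFunction.log n ≤ N * Real.log N := by
    calc _ ≤ ∑ n ∈ Ioc 0 N, Real.log N := by
          refine sum_le_sum fun n hn ↦ ?_
          rw [ArithmeticFunction.log_apply]
          rw [mem_Ioc] at hn
          exact Real.log_le_log (by exact_mod_cast hn.1) (by exact_mod_cast hn.2)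
      _ = _ := by simp
  have h2 : (N / 2 : ℝ) * ∑ n ∈ Ioc 0 N, ArithmeticFunction.vonMangoldt n / n ≤
      ∑ n ∈ Ioc 0 N, ArithmeticFunction.vonMangoldt n * ((N / n : ℕ) : ℝ) := by
    rw [mul_sum]
    refine sum_le_sum fun n hn ↦ ?_
    rw [mem_Ioc] at hn
    have hn0 : (0 : ℝ) < n := by exact_mod_cast hn.1
    have h3 : (N : ℝ) ≤ 2 * n * (N / n : ℕ) := by
      have h4 : 1 ≤ N / n := (Nat.one_le_div_iff hn.1).2 hn.2
      have h5 : N < n * (N / n + 1) := Nat.lt_mul_div_succ N hn.1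
      have : N ≤ 2 * n * (N / n) := by nlinarith
      exact_mod_cast this
    have h4 : (N : ℝ) / 2 / n ≤ (N / n : ℕ) := by
      rw [div_div, div_le_iff₀ (by positivity)]; linarith
    calc _ = ArithmeticFunction.vonMangoldt n * ((N : ℝ) / 2 / n) := by ring
      _ ≤ _ := mul_le_mul_of_nonneg_left h4 ArithmeticFunction.vonMangoldt_nonneg
  rw [← h] at h2
  have h5 := h2.trans h1
  have h6 : (N : ℝ) * (∑ n ∈ Ioc 0 N, ArithmeticFunction.vonMangoldt n / n) ≤ N * (2 * Real.log N) := by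
    linarith
  exact le_of_mul_le_mul_left h6 hN0

lemma sum_prime_log_div_le (N : ℕ) (hN : 1 ≤ N) :
    ∑ p ∈ (N + 1).primesBelow, Real.log p / p ≤ 2 * Real.log N := by
  refine le_trans ?_ (sum_vonMangoldt_div_le N hN)
  have : ∑ p ∈ (N + 1).primesBelow, Real.log p / p =
      ∑ p ∈ (N + 1).primesBelow, ArithmeticFunction.vonMangoldt p / p := by
    refine sum_congr rfl fun p hp ↦ ?_
    rw [ArithmeticFunction.vonMangoldt_apply_prime (Nat.prime_of_mem_primesBelow hp)]
  rw [this]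
  refine sum_le_sum_of_subset_of_nonneg ?_ fun n _ _ ↦ ?_
  · intro p hp
    have h1 := (Nat.prime_of_mem_primesBelow hp).pos
    have h2 := Nat.lt_of_mem_primesBelow hp
    rw [mem_Ioc]; omega
  · exact div_nonneg ArithmeticFunction.vonMangoldt_nonneg (by positivity)

/-- the completely multiplicative function `n ^ (-σ)` -/
noncomputable def powHom (σ : ℝ) : ℕ →* ℝ where
  toFun n := (n : ℝ) ^ (-σ)
  map_one' := by simp
  map_mul' m n := by
    push_cast
    exact Real.mul_rpow (by positivity) (by positivity)

lemma exp_sum_rpow_le : ∃ C : ℝ, 1 ≤ C ∧ ∀ η : ℝ, 0 < η → η ≤ 2 → ∀ N : ℕ,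
    Real.exp (∑ p ∈ N.primesBelow, (p : ℝ) ^ (-(1 + η))) ≤ C / η := by
  obtain ⟨C, hC, h⟩ := zeta_real_bound
  refine ⟨C, hC, fun η h0 h2 N ↦ le_trans ?_ (h η h0 h2)⟩
  have hs : Summable (powHom (1 + η)) := by
    change Summable fun n : ℕ ↦ (n : ℝ) ^ (-(1 + η))
    rw [Real.summable_nat_rpow]; linarith
  have hp := EulerProduct.prod_primesBelow_geometric_eq_tsum_smoothNumbers hs N
  have hz : riemannZeta (1 + η) = ((∑' n : ℕ, powHom (1 + η) n : ℝ) : ℂ) := by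
    rw [zeta_eq_tsum_one_div_nat_cpow (by simpa using h0), Complex.ofReal_tsum]
    refine tsum_congr fun n ↦ ?_
    change _ = (((n : ℝ) ^ (-(1 + η)) : ℝ) : ℂ)
    rw [Complex.ofReal_cpow (by positivity)]
    push_cast
    rw [Complex.cpow_neg, one_div]
  have hnn : ∀ n, 0 ≤ powHom (1 + η) n := fun n ↦ by
    change 0 ≤ (n : ℝ) ^ (-(1 + η)); positivity
  rw [hz, Complex.norm_real, Real.norm_of_nonneg (tsum_nonneg hnn), Real.exp_sum]
  calc _ ≤ ∏ p ∈ N.primesBelow, (1 - powHom (1 + η) p)⁻¹ := by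
        refine prod_le_prod (fun _ _ ↦ (Real.exp_pos _).le) fun p hp ↦ ?_
        have hp2 := (Nat.prime_of_mem_primesBelow hp).one_lt
        have hlt : (p : ℝ) ^ (-(1 + η)) < 1 :=
          Real.rpow_lt_one_of_one_lt_of_neg (by exact_mod_cast hp2) (by linarith)
        change _ ≤ (1 - (p : ℝ) ^ (-(1 + η)))⁻¹
        rw [← inv_inv (Real.exp _), ← Real.exp_neg]
        refine inv_anti₀ (by linarith) ?_
        have := Real.add_one_le_exp (-(p : ℝ) ^ (-(1 + η)))
        linarith
    _ = _ := hp
    _ ≤ _ := hs.tsum_subtype_le _ _ hnn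

lemma mertens_upper : ∃ C : ℝ, 0 < C ∧ ∀ N : ℕ, 3 ≤ N →
    Real.exp (∑ p ∈ (N + 1).primesBelow, 1 / (p : ℝ)) ≤ C * Real.log N := by
  obtain ⟨C, hC, h⟩ := exp_sum_rpow_le
  refine ⟨C * Real.exp 2, by positivity, fun N hN ↦ ?_⟩
  have hL := log_ge_one_of_three hN
  set L := Real.log N with hLd
  have h1 := h (1 / L) (by positivity) (by rw [div_le_iff₀ (by linarith)]; linarith) (N + 1)
  have h2 : ∑ p ∈ (N + 1).primesBelow, 1 / (p : ℝ) ≤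
      ∑ p ∈ (N + 1).primesBelow, (p : ℝ) ^ (-(1 + 1 / L)) + 2 := by
    have h3 : ∑ p ∈ (N + 1).primesBelow, (1 / (p : ℝ) - (p : ℝ) ^ (-(1 + 1 / L))) ≤
        ∑ p ∈ (N + 1).primesBelow, (1 / L) * (Real.log p / p) := by
      refine sum_le_sum fun p hp ↦ ?_
      have hp0 : (0 : ℝ) < p := by exact_mod_cast (Nat.prime_of_mem_primesBelow hp).pos
      have : (p : ℝ) ^ (-(1 + 1 / L)) = 1 / p * Real.exp (-(1 / L * Real.log p)) := by
        rw [neg_add, Real.rpow_add hp0, Real.rpow_neg_one, one_div, Real.rpow_def_of_pos hp0]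
        congr 2; rw [one_div]; ring
      rw [this]
      have h4 := Real.add_one_le_exp (-(1 / L * Real.log p))
      have h5 : 0 < 1 / (p : ℝ) := by positivity
      have : 1 / L * (Real.log p / p) = 1 / p * (1 / L * Real.log p) := by ring
      rw [this]
      nlinarith
    rw [← mul_sum, sum_sub_distrib] at h3
    have h4 := sum_prime_log_div_le N (by omega)
    have h5 : 1 / L * ∑ p ∈ (N + 1).primesBelow, Real.log p / p ≤ 1 / L * (2 * L) := by
      gcongr
    have h6 : 1 / L * (2 * L) = 2 := by field_simp
    linarith
  calc _ ≤ Real.exp (∑ p ∈ (N + 1).primesBelow, (p : ℝ) ^ (-(1 + 1 / L)) + 2) :=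
        Real.exp_le_exp.2 h2
    _ = Real.exp (∑ p ∈ (N + 1).primesBelow, (p : ℝ) ^ (-(1 + 1 / L))) * Real.exp 2 :=
        Real.exp_add _ _
    _ ≤ C / (1 / L) * Real.exp 2 := by gcongr
    _ = _ := by field_simp

/-- `k (k+1) log p` at `q = p^k` -/
noncomputable def cfun (q : ℕ) : ℝ :=
  ArithmeticFunction.vonMangoldt q *
    ((ArithmeticFunction.cardFactors q : ℝ) * ((ArithmeticFunction.cardFactors q : ℝ) + 1))

lemma cfun_nonneg (q : ℕ) : 0 ≤ cfun q :=
  mul_nonneg ArithmeticFunction.vonMangoldt_nonneg (by positivity)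

lemma cfun_prime_pow {p k : ℕ} (hp : p.Prime) (hk : k ≠ 0) :
    cfun (p ^ k) = k * (k + 1) * Real.log p := by
  rw [cfun, ArithmeticFunction.vonMangoldt_apply_pow hk,
    ArithmeticFunction.vonMangoldt_apply_prime hp,
    ArithmeticFunction.cardFactors_apply_prime_pow hp]
  ring

lemma cfun_le {N q : ℕ} (hN : 1 ≤ N) (hq : q ≤ N) : cfun q ≤
    ArithmeticFunction.vonMangoldt q * (8 * Real.log N ^ 2 + 2 * Real.log N + 2) := by
  by_cases h : IsPrimePow q
  · obtain ⟨p, k, hp, hk, rfl⟩ := (isPrimePow_nat_iff _).1 h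
    rw [cfun, ArithmeticFunction.cardFactors_apply_prime_pow hp]
    refine mul_le_mul_of_nonneg_left ?_ ArithmeticFunction.vonMangoldt_nonneg
    have h1 : (2 : ℝ) ^ k ≤ N := by
      have : 2 ^ k ≤ p ^ k := Nat.pow_le_pow_left hp.two_le k
      exact_mod_cast this.trans hq
    have h2 : k * Real.log 2 ≤ Real.log N := by
      rw [← Real.log_pow]; exact Real.log_le_log (by positivity) h1
    have h3 := Real.log_two_gt_d9
    have h4 : (k : ℝ) ≤ 2 * Real.log N := by nlinarith [(Nat.cast_nonneg k : (0 : ℝ) ≤ k)]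
    have h5 : 0 ≤ Real.log N := Real.log_natCast_nonneg N
    nlinarith [(Nat.cast_nonneg k : (0 : ℝ) ≤ k)]
  · rw [cfun, ArithmeticFunction.vonMangoldt_eq_zero_iff.2 h]; simp

lemma cfun_sum_le : ∃ C : ℝ, 0 < C ∧ ∀ N : ℕ, ∑ q ∈ Ioc 0 N, cfun q ≤ C * N := by
  obtain ⟨D, hD⟩ := Chebyshev.psi_sub_theta_le_mul_sqrt
  have hD0 : 0 ≤ D := by
    have h1 := hD 1
    simpa using h1
  refine ⟨2 * Real.log 4 + D * 164, by have := Real.log_pos (by norm_num : (1 : ℝ) < 4); positivity,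
    fun N ↦ ?_⟩
  rcases Nat.eq_zero_or_pos N with rfl | hN
  · simp
  have h1 := Chebyshev.psi_sub_theta_eq_sum_not_prime N
  have h2 := hD N
  have h3 := Chebyshev.theta_le_log4_mul_x (x := N) (by positivity)
  rw [h1] at h2
  rw [Chebyshev.theta] at h3
  simp only [Nat.floor_natCast] at h2 h3
  set B : ℝ := 8 * Real.log N ^ 2 + 2 * Real.log N + 2 with hB
  have h5 : 0 ≤ Real.log N := Real.log_natCast_nonneg N
  have hs := log_sq_le N hN
  have hs1 : 1 ≤ Real.sqrt N := Real.one_le_sqrt.2 (by exact_mod_cast hN)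
  have hBs : B ≤ 164 * Real.sqrt N := by
    rw [hB]; nlinarith [sq_nonneg (Real.log N - 1)]
  rw [← sum_filter_add_sum_filter_not (Ioc 0 N) Nat.Prime]
  have e1 : ∑ q ∈ Ioc 0 N with q.Prime, cfun q ≤ 2 * (Real.log 4 * N) := by
    refine le_trans (le_of_eq ?_) (mul_le_mul_of_nonneg_left h3 zero_le_two)
    rw [mul_sum]
    refine sum_congr rfl fun p hp ↦ ?_
    have := cfun_prime_pow (mem_filter.1 hp).2 one_ne_zero
    rw [pow_one] at this
    rw [this]; norm_num
  have e2 : ∑ q ∈ Ioc 0 N with ¬ q.Prime, cfun q ≤ D * Real.sqrt N * B := by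
    refine le_trans ?_ (mul_le_mul_of_nonneg_right h2 (by positivity))
    rw [sum_mul]
    refine sum_le_sum fun q hq ↦ cfun_le hN ?_
    exact (mem_Ioc.1 (mem_filter.1 hq).1).2
  have e3 : D * Real.sqrt N * B ≤ D * Real.sqrt N * (164 * Real.sqrt N) := by gcongr
  have e4 : D * Real.sqrt N * (164 * Real.sqrt N) = D * 164 * N := by
    have := Real.mul_self_sqrt (Nat.cast_nonneg N : (0 : ℝ) ≤ N)
    linear_combination D * 164 * this
  linarith
end

section
open Finset

/-- weight supported on powers of two -/
noncomputable def vfun : ArithmeticFunction ℝ where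
  toFun n := if n = 2 ^ Nat.log 2 n then (n : ℝ) / ((Nat.log 2 n : ℝ) + 1) ^ 2 else 0
  map_zero' := by simp

lemma vfun_apply (n : ℕ) : vfun n =
    if n = 2 ^ Nat.log 2 n then (n : ℝ) / ((Nat.log 2 n : ℝ) + 1) ^ 2 else 0 := rfl

lemma vfun_nonneg (n : ℕ) : 0 ≤ vfun n := by
  rw [vfun_apply]; split_ifs <;> positivity

lemma vfun_two_pow (j : ℕ) : vfun (2 ^ j) = 2 ^ j / ((j : ℝ) + 1) ^ 2 := by
  rw [vfun_apply]; simp [Nat.log_pow]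

lemma vfun_sum_ge (N : ℕ) (hN : 1 ≤ N) :
    2 ^ (Nat.log 2 N) / ((Nat.log 2 N : ℝ) + 1) ^ 2 ≤ ∑ k ∈ Ioc 0 N, vfun k := by
  rw [← vfun_two_pow]
  refine single_le_sum (f := fun k ↦ vfun k) (fun k _ ↦ vfun_nonneg k) ?_
  rw [mem_Ioc]
  exact ⟨by positivity, Nat.pow_log_le_self 2 (by omega)⟩

lemma vfun_sum_eq (N : ℕ) (hN : 1 ≤ N) (g : ℕ → ℝ) :
    ∑ k ∈ Ioc 0 N, vfun k * g k = ∑ j ∈ range (Nat.log 2 N + 1), vfun (2 ^ j) * g (2 ^ j) := by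
  rw [← sum_image (s := range (Nat.log 2 N + 1)) (g := fun j ↦ 2 ^ j)
    (f := fun k ↦ vfun k * g k) (fun a _ b _ h ↦ Nat.pow_right_injective le_rfl h)]
  symm
  refine sum_subset ?_ ?_
  · intro k hk
    obtain ⟨j, hj, rfl⟩ := mem_image.1 hk
    rw [mem_Ioc]
    refine ⟨by positivity, ?_⟩
    exact (Nat.pow_le_pow_right two_pos (by simpa [Nat.lt_succ_iff] using hj)).trans
      (Nat.pow_log_le_self 2 (by omega))
  · intro k hk hk2
    rw [mem_Ioc] at hk
    rw [vfun_apply, if_neg, zero_mul]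
    intro h
    apply hk2
    rw [mem_image]
    exact ⟨Nat.log 2 k, by simpa [Nat.lt_succ_iff] using Nat.log_mono_right hk.2, h.symm⟩

lemma vfun_div_sum_le : ∃ K : ℝ, 0 < K ∧ ∀ N : ℕ, ∑ k ∈ Ioc 0 N, vfun k / k ≤ K := by
  have hs : Summable fun j : ℕ ↦ 1 / ((j : ℝ) + 1) ^ 2 := by
    have := (summable_nat_add_iff 1).2 (Real.summable_one_div_nat_pow.2 one_lt_two)
    simpa using this
  refine ⟨∑' j : ℕ, 1 / ((j : ℝ) + 1) ^ 2, ?_, fun N ↦ ?_⟩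
  · exact hs.tsum_pos (fun j ↦ by positivity) 0 (by norm_num)
  rcases Nat.eq_zero_or_pos N with rfl | hN
  · simpa using tsum_nonneg (fun j : ℕ ↦ by positivity)
  have := vfun_sum_eq N hN fun k ↦ (k : ℝ)⁻¹
  simp only [div_eq_mul_inv]
  rw [this]
  refine le_trans (le_of_eq ?_) (hs.sum_le_tsum (range (Nat.log 2 N + 1)) fun j _ ↦ by positivity)
  refine sum_congr rfl fun j _ ↦ ?_
  rw [vfun_two_pow]; push_cast; field_simp

lemma two_pow_sum_le (J : ℕ) :
    ∑ j ∈ range (J + 1), (2 : ℝ) ^ j / ((j : ℝ) + 1) ^ 2 ≤ 2 * 2 ^ J / ((J : ℝ) + 1) := by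
  induction J with
  | zero => norm_num
  | succ J ih =>
    rw [sum_range_succ]
    rcases Nat.eq_zero_or_pos J with rfl | hJ
    · norm_num
    have hJ1 : (1 : ℝ) ≤ J := by exact_mod_cast hJ
    refine (add_le_add_left ih _).trans ?_
    push_cast
    have h1 : 2 / ((J : ℝ) + 1) + 2 / ((J : ℝ) + 1 + 1) ^ 2 ≤ 4 / ((J : ℝ) + 1 + 1) := by
      rw [div_add_div _ _ (by positivity) (by positivity), div_le_div_iff₀ (by positivity) (by positivity)]
      have : 0 ≤ ((J : ℝ) + 2) * (2 * J ^ 2 + 2 * J - 2) := by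
        apply mul_nonneg <;> nlinarith
      nlinarith
    calc _ = 2 ^ J * (2 / ((J : ℝ) + 1) + 2 / ((J : ℝ) + 1 + 1) ^ 2) := by ring
      _ ≤ 2 ^ J * (4 / ((J : ℝ) + 1 + 1)) := by gcongr
      _ = _ := by ring

lemma vfun_sum_mul_log_le (X d : ℕ) (hd : 1 ≤ d) (hX : d ≤ X) :
    (∑ k ∈ Ioc 0 (X / d), vfun k) * (Real.log X - Real.log d) ≤ 2 * X / d := by
  have hN : 1 ≤ X / d := (Nat.one_le_div_iff hd).2 hX
  have h1 := vfun_sum_eq (X / d) hN fun _ ↦ 1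
  simp only [mul_one, vfun_two_pow] at h1
  rw [h1]
  set J := Nat.log 2 (X / d) with hJ
  have h2 := two_pow_sum_le J
  have hd0 : (0 : ℝ) < d := by exact_mod_cast hd
  have hX0 : (0 : ℝ) < X := by exact_mod_cast hd.trans hX
  have h3 : (2 : ℝ) ^ J ≤ X / d := by
    have : 2 ^ J ≤ X / d := Nat.pow_log_le_self 2 (by omega)
    calc (2 : ℝ) ^ J ≤ (X / d : ℕ) := by exact_mod_cast this
      _ ≤ _ := Nat.cast_div_le
  have h4 : (X : ℝ) / d ≤ 2 ^ (J + 1) := by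
    have h5 : X / d < 2 ^ (J + 1) := Nat.lt_pow_succ_log_self one_lt_two _
    have h6 : X < 2 ^ (J + 1) * d := (Nat.div_lt_iff_lt_mul hd).1 h5
    rw [div_le_iff₀ hd0]
    exact_mod_cast h6.le
  have h5 : Real.log X - Real.log d ≤ J + 1 := by
    rw [← Real.log_div hX0.ne' hd0.ne']
    calc _ ≤ Real.log (2 ^ (J + 1)) := Real.log_le_log (by positivity) h4
      _ = (J + 1) * Real.log 2 := by rw [Real.log_pow]; push_cast; ring
      _ ≤ (J + 1) * 1 := by gcongr; linarith [Real.log_two_lt_d9]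
      _ = _ := by ring
  have h6 : 0 ≤ Real.log X - Real.log d := by
    have : Real.log d ≤ Real.log X := Real.log_le_log hd0 (by exact_mod_cast hX)
    linarith
  calc _ ≤ (2 * 2 ^ J / ((J : ℝ) + 1)) * (J + 1) := by gcongr
    _ = 2 * 2 ^ J := by field_simp
    _ ≤ 2 * (X / d) := by gcongr
    _ = _ := by ring

/-- `cfun` as arithmetic function -/
noncomputable def cA : ArithmeticFunction ℝ where
  toFun := cfun
  map_zero' := by simp [cfun]

lemma vc_sum_le : ∃ C : ℝ, 0 < C ∧ ∀ Y : ℕ, ∑ n ∈ Ioc 0 Y, (vfun * cA) n ≤ C * Y := by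
  obtain ⟨C, hC, h⟩ := cfun_sum_le
  obtain ⟨K, hK, hv⟩ := vfun_div_sum_le
  refine ⟨C * K, by positivity, fun Y ↦ ?_⟩
  rw [ArithmeticFunction.sum_Ioc_mul_eq_sum_sum]
  calc _ ≤ ∑ k ∈ Ioc 0 Y, C * Y * (vfun k / k) := by
        refine sum_le_sum fun k hk ↦ ?_
        have h1 : ∑ m ∈ Ioc 0 (Y / k), cA m ≤ C * (Y / k) := by
          refine (h (Y / k)).trans ?_
          gcongr
          exact Nat.cast_div_le
        calc _ ≤ vfun k * (C * (Y / k)) := mul_le_mul_of_nonneg_left h1 (vfun_nonneg k)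
          _ = _ := by ring
    _ = C * Y * ∑ k ∈ Ioc 0 Y, vfun k / k := by rw [mul_sum]
    _ ≤ C * Y * K := by gcongr; exact hv Y
    _ = _ := by ring

/-- the properties of `|f * 1|` used below -/
structure Good (H : ArithmeticFunction ℝ) : Prop where
  one : H 1 = 1
  nonneg : ∀ n, 0 ≤ H n
  mul : ∀ {m n : ℕ}, m.Coprime n → H (m * n) = H m * H n
  le : ∀ {p : ℕ} (k : ℕ), p.Prime → H (p ^ k) ≤ k + 1

lemma good_log_le {H : ArithmeticFunction ℝ} (hH : Good H) (n : ℕ) (hn : n ≠ 0) :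
    H n * Real.log n ≤ (cA * H) n := by
  rw [ArithmeticFunction.mul_apply, Real.log_nat_eq_sum_factorization, Finsupp.sum,
    Nat.support_factorization, mul_sum]
  have hinj : Set.InjOn (fun p ↦ (p ^ n.factorization p, n / p ^ n.factorization p))
      (n.primeFactors : Set ℕ) := by
    intro p hp q hq h
    have hp' := Nat.prime_of_mem_primeFactors hp
    have hq' := Nat.prime_of_mem_primeFactors hq
    have h1 : p ^ n.factorization p = q ^ n.factorization q := (Prod.mk.inj h).1
    have hp0 : n.factorization p ≠ 0 := by
      rw [← Finsupp.mem_support_iff, Nat.support_factorization]; exact hp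
    have hq0 : n.factorization q ≠ 0 := by
      rw [← Finsupp.mem_support_iff, Nat.support_factorization]; exact hq
    rw [← hp'.pow_minFac hp0, h1, hq'.pow_minFac hq0]
  calc _ ≤ ∑ p ∈ n.primeFactors, cA (p ^ n.factorization p) * H (n / p ^ n.factorization p) := by
        refine sum_le_sum fun p hp ↦ ?_
        have hp' := Nat.prime_of_mem_primeFactors hp
        have hp0 : n.factorization p ≠ 0 := by
          rw [← Finsupp.mem_support_iff, Nat.support_factorization]; exact hp
        have h1 : H n = H (p ^ n.factorization p) * H (n / p ^ n.factorization p) := by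
          rw [← hH.mul, Nat.ordProj_mul_ordCompl_eq_self]
          exact (Nat.coprime_ordCompl hp' hn).pow_left _
        have h2 : cA (p ^ n.factorization p) = _ := cfun_prime_pow hp' hp0
        rw [h1, h2]
        have h3 := hH.le (n.factorization p) hp'
        have h4 := hH.nonneg (n / p ^ n.factorization p)
        have h5 : 0 ≤ (n.factorization p : ℝ) * Real.log p :=
          mul_nonneg (by positivity) (Real.log_natCast_nonneg p)
        calc _ ≤ ((n.factorization p : ℝ) + 1) * H (n / p ^ n.factorization p) *
              (n.factorization p * Real.log p) := by gcongr
          _ = _ := by ring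
    _ = ∑ x ∈ n.primeFactors.image
          (fun p ↦ (p ^ n.factorization p, n / p ^ n.factorization p)), cA x.1 * H x.2 :=
        (sum_image hinj (f := fun x : ℕ × ℕ ↦ cA x.1 * H x.2)).symm
    _ ≤ _ := by
        refine sum_le_sum_of_subset_of_nonneg ?_ fun x _ _ ↦
          mul_nonneg (cfun_nonneg _) (hH.nonneg _)
        intro x hx
        obtain ⟨p, hp, rfl⟩ := mem_image.1 hx
        rw [Nat.mem_divisorsAntidiagonal]
        exact ⟨Nat.ordProj_mul_ordCompl_eq_self n p, hn⟩

lemma good_W_le : ∃ C : ℝ, 0 < C ∧ ∀ H : ArithmeticFunction ℝ, Good H → ∀ X : ℕ,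
    (∑ d ∈ Ioc 0 X, H d * ∑ k ∈ Ioc 0 (X / d), vfun k) * Real.log X ≤
      C * X * ∑ d ∈ Ioc 0 X, H d / d := by
  obtain ⟨C, hC, h⟩ := vc_sum_le
  refine ⟨C + 2, by positivity, fun H hH X ↦ ?_⟩
  have h1 : ∑ d ∈ Ioc 0 X, H d * Real.log d * ∑ k ∈ Ioc 0 (X / d), vfun k ≤
      C * X * ∑ d ∈ Ioc 0 X, H d / d := by
    calc _ ≤ ∑ d ∈ Ioc 0 X, (cA * H) d * ∑ k ∈ Ioc 0 (X / d), vfun k := by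
          refine sum_le_sum fun d hd ↦ ?_
          refine mul_le_mul_of_nonneg_right (good_log_le hH d (mem_Ioc.1 hd).1.ne')
            (sum_nonneg fun k _ ↦ vfun_nonneg k)
      _ = ∑ n ∈ Ioc 0 X, (cA * H * vfun) n :=
          (ArithmeticFunction.sum_Ioc_mul_eq_sum_sum _ _ _).symm
      _ = ∑ n ∈ Ioc 0 X, (H * (vfun * cA)) n := by
          rw [show cA * H * vfun = H * (vfun * cA) by ring]
      _ = ∑ d ∈ Ioc 0 X, H d * ∑ n ∈ Ioc 0 (X / d), (vfun * cA) n :=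
          ArithmeticFunction.sum_Ioc_mul_eq_sum_sum _ _ _
      _ ≤ ∑ d ∈ Ioc 0 X, C * X * (H d / d) := by
          refine sum_le_sum fun d hd ↦ ?_
          calc _ ≤ H d * (C * (X / d)) := by
                refine mul_le_mul_of_nonneg_left ((h _).trans ?_) (hH.nonneg d)
                gcongr
                exact Nat.cast_div_le
            _ = _ := by ring
      _ = _ := by rw [mul_sum]
  have h2 : ∑ d ∈ Ioc 0 X, H d * ((∑ k ∈ Ioc 0 (X / d), vfun k) * (Real.log X - Real.log d)) ≤
      2 * X * ∑ d ∈ Ioc 0 X, H d / d := by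
    rw [mul_sum]
    refine sum_le_sum fun d hd ↦ ?_
    rw [mem_Ioc] at hd
    calc _ ≤ H d * (2 * X / d) :=
          mul_le_mul_of_nonneg_left (vfun_sum_mul_log_le X d hd.1 hd.2) (hH.nonneg d)
      _ = _ := by ring
  have h3 : (∑ d ∈ Ioc 0 X, H d * ∑ k ∈ Ioc 0 (X / d), vfun k) * Real.log X =
      ∑ d ∈ Ioc 0 X, H d * Real.log d * ∑ k ∈ Ioc 0 (X / d), vfun k +
      ∑ d ∈ Ioc 0 X, H d * ((∑ k ∈ Ioc 0 (X / d), vfun k) * (Real.log X - Real.log d)) := by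
    rw [sum_mul, ← sum_add_distrib]
    refine sum_congr rfl fun d _ ↦ ?_
    ring
  rw [h3]
  linarith
end

open Finset

lemma good_euler_factor : ∃ D : ℝ, 0 < D ∧ ∀ H : ArithmeticFunction ℝ, Good H → ∀ p : ℕ, p.Prime →
    Summable (fun k : ℕ ↦ H (p ^ k) / ((p ^ k : ℕ) : ℝ)) ∧
    ∑' k : ℕ, H (p ^ k) / ((p ^ k : ℕ) : ℝ) ≤ Real.exp (H p / p) * Real.exp (D * (1 / (p : ℝ) ^ 2)) := by
  have hs : Summable fun k : ℕ ↦ ((k : ℝ) + 3) * (1 / 2) ^ k := by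
    have h1 := summable_pow_mul_geometric_of_norm_lt_one (R := ℝ) 1 (r := 1 / 2) (by norm_num)
    have h2 := (summable_geometric_of_lt_one (r := (1 / 2 : ℝ)) (by norm_num) (by norm_num)).mul_left 3
    refine (h1.add h2).congr fun k ↦ ?_
    simp only [pow_one]; ring
  refine ⟨∑' k : ℕ, ((k : ℝ) + 3) * (1 / 2) ^ k, hs.tsum_pos (fun k ↦ by positivity) 0 (by norm_num),
    fun H hH p hp ↦ ?_⟩
  have hp2 : (2 : ℝ) ≤ p := by exact_mod_cast hp.two_le
  have hb : ∀ k : ℕ, H (p ^ (k + 2)) / ((p ^ (k + 2) : ℕ) : ℝ) ≤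
      1 / (p : ℝ) ^ 2 * (((k : ℝ) + 3) * (1 / 2) ^ k) := by
    intro k
    have h1 := hH.le (k + 2) hp
    push_cast at h1 ⊢
    have h2 : (1 : ℝ) / p ^ k ≤ (1 / 2) ^ k := by
      rw [one_div_pow]; gcongr
    calc _ ≤ ((k : ℝ) + 2 + 1) / (p : ℝ) ^ (k + 2) := by gcongr
      _ = 1 / (p : ℝ) ^ 2 * (((k : ℝ) + 3) * (1 / p ^ k)) := by
          rw [pow_add]; field_simp; ring
      _ ≤ _ := by gcongr
  have hn : ∀ k : ℕ, 0 ≤ H (p ^ k) / ((p ^ k : ℕ) : ℝ) := fun k ↦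
    div_nonneg (hH.nonneg _) (by positivity)
  have hs2 : Summable fun k : ℕ ↦ H (p ^ (k + 2)) / ((p ^ (k + 2) : ℕ) : ℝ) :=
    Summable.of_nonneg_of_le (fun k ↦ hn _) hb (hs.mul_left _)
  have hs1 : Summable (fun k : ℕ ↦ H (p ^ k) / ((p ^ k : ℕ) : ℝ)) := (summable_nat_add_iff 2).1 hs2
  refine ⟨hs1, ?_⟩
  rw [← hs1.sum_add_tsum_nat_add 2]
  have h3 := hs2.tsum_le_tsum hb (hs.mul_left _)
  rw [tsum_mul_left] at h3
  rw [sum_range_succ, sum_range_one]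
  simp only [pow_zero, pow_one, hH.one, Nat.cast_one, div_one]
  rw [← Real.exp_add]
  refine le_trans ?_ (Real.add_one_le_exp _)
  linarith

lemma good_P_le : ∃ C : ℝ, 0 < C ∧ ∀ H : ArithmeticFunction ℝ, Good H → ∀ X : ℕ,
    ∑ d ∈ Ioc 0 X, H d / d ≤ C * Real.exp (∑ p ∈ (X + 1).primesBelow, H p / p) := by
  obtain ⟨D, hD, h⟩ := good_euler_factor
  refine ⟨Real.exp (D * ∑' n : ℕ, 1 / (n : ℝ) ^ 2), Real.exp_pos _, fun H hH X ↦ ?_⟩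
  have hz : Summable fun n : ℕ ↦ 1 / (n : ℝ) ^ 2 := Real.summable_one_div_nat_pow.2 one_lt_two
  obtain ⟨-, h2⟩ := EulerProduct.summable_and_hasSum_smoothNumbers_prod_primesBelow_tsum
    (f := fun n : ℕ ↦ H n / (n : ℝ)) (by simp [hH.one])
    (by intro m n hmn; simp only [hH.mul hmn]; push_cast; rw [mul_div_mul_comm])
    (fun {p} hp ↦ (h H hH p hp).1.norm) (X + 1)
  have hn : ∀ n : ℕ, 0 ≤ H n / (n : ℝ) := fun n ↦ div_nonneg (hH.nonneg _) (by positivity)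
  calc _ ≤ ∏ p ∈ (X + 1).primesBelow, ∑' k : ℕ, H (p ^ k) / ((p ^ k : ℕ) : ℝ) := by
        rw [← h2.tsum_eq]
        have h3 := h2.summable.sum_le_tsum
          ((Ioc 0 X).subtype (fun n ↦ n ∈ (X + 1).smoothNumbers)) fun n _ ↦ hn n
        refine le_trans (le_of_eq ?_) h3
        rw [sum_subtype_eq_sum_filter (f := fun n : ℕ ↦ H n / (n : ℝ)), filter_true_of_mem]
        intro n hn
        rw [mem_Ioc] at hn
        exact Nat.mem_smoothNumbers_of_lt hn.1 (by omega)
    _ ≤ ∏ p ∈ (X + 1).primesBelow,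
        (Real.exp (H p / p) * Real.exp (D * (1 / (p : ℝ) ^ 2))) := by
        refine prod_le_prod (fun p _ ↦ tsum_nonneg fun k ↦ hn _) fun p hp ↦ ?_
        exact (h H hH p (Nat.prime_of_mem_primesBelow hp)).2
    _ = Real.exp (∑ p ∈ (X + 1).primesBelow, H p / p) *
        Real.exp (D * ∑ p ∈ (X + 1).primesBelow, (1 / (p : ℝ) ^ 2)) := by
        rw [prod_mul_distrib, ← Real.exp_sum, ← Real.exp_sum, mul_sum]
    _ ≤ Real.exp (∑ p ∈ (X + 1).primesBelow, H p / p) *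
        Real.exp (D * ∑' n : ℕ, 1 / (n : ℝ) ^ 2) := by
        gcongr
        exact hz.sum_le_tsum _ fun n _ ↦ by positivity
    _ = _ := mul_comm _ _

/-- `f` as arithmetic function -/
noncomputable def toAF (f : ℕ → ℝ) : ArithmeticFunction ℝ where
  toFun n := if n = 0 then 0 else f n
  map_zero' := by simp

lemma toAF_apply (f : ℕ → ℝ) {n : ℕ} (hn : n ≠ 0) : toAF f n = f n := by
  change (if n = 0 then 0 else f n) = f n
  simp [hn]

/-- pointwise absolute value -/
noncomputable def absAF (g : ArithmeticFunction ℝ) : ArithmeticFunction ℝ where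
  toFun n := |g n|
  map_zero' := by simp

lemma absAF_apply (g : ArithmeticFunction ℝ) (n : ℕ) : absAF g n = |g n| := rfl

/-- `f * 1` -/
noncomputable def gAF (f : ℕ → ℝ) : ArithmeticFunction ℝ :=
  toAF f * (ArithmeticFunction.zeta : ArithmeticFunction ℝ)

lemma gAF_prime_pow_le (f : ℕ → ℝ) (hb : ∀ n : ℕ, 1 ≤ n → |f n| ≤ 1) {p : ℕ} (hp : p.Prime) (k : ℕ) :
    |gAF f (p ^ k)| ≤ k + 1 := by
  rw [gAF, ArithmeticFunction.coe_mul_zeta_apply]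
  refine (abs_sum_le_sum_abs _ _).trans ?_
  have : ∀ i ∈ (p ^ k).divisors, |toAF f i| ≤ 1 := by
    intro i hi
    have := Nat.pos_of_mem_divisors hi
    rw [toAF_apply f this.ne']
    exact hb i this
  refine (sum_le_card_nsmul _ _ 1 this).trans ?_
  rw [Nat.divisors_prime_pow hp]
  simp

lemma gAF_prime (f : ℕ → ℝ) (h1 : f 1 = 1) {p : ℕ} (hp : p.Prime) : gAF f p = 1 + f p := by
  rw [gAF, ArithmeticFunction.coe_mul_zeta_apply, hp.sum_divisors,
    toAF_apply f hp.ne_zero, toAF_apply f one_ne_zero, h1, add_comm]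

lemma gAF_mult (f : ℕ → ℝ) (h1 : f 1 = 1)
    (hm : ∀ m n : ℕ, Nat.Coprime m n → f (m * n) = f m * f n) : (gAF f).IsMultiplicative := by
  refine ArithmeticFunction.IsMultiplicative.mul ?_
    ArithmeticFunction.isMultiplicative_zeta.natCast
  rw [ArithmeticFunction.IsMultiplicative.iff_ne_zero]
  refine ⟨by rw [toAF_apply f one_ne_zero, h1], fun {m n} hm0 hn0 hmn ↦ ?_⟩
  rw [toAF_apply f hm0, toAF_apply f hn0, toAF_apply f (mul_ne_zero hm0 hn0), hm m n hmn]

lemma gAF_good (f : ℕ → ℝ) (h1 : f 1 = 1)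
    (hm : ∀ m n : ℕ, Nat.Coprime m n → f (m * n) = f m * f n)
    (hb : ∀ n : ℕ, 1 ≤ n → |f n| ≤ 1) : Good (absAF (gAF f)) where
  one := by rw [absAF_apply, (gAF_mult f h1 hm).1, abs_one]
  nonneg n := abs_nonneg _
  mul h := by
    rw [absAF_apply, absAF_apply, absAF_apply, (gAF_mult f h1 hm).2 h, abs_mul]
  le k hp := gAF_prime_pow_le f hb hp k

lemma sum_f_eq (f : ℕ → ℝ) (X : ℕ) : ∑ n ∈ Ioc 0 X, f n =
    ∑ d ∈ Ioc 0 X, gAF f d * ∑ n ∈ Ioc 0 (X / d), (ArithmeticFunction.moebius n : ℝ) := by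
  have h := ArithmeticFunction.sum_Ioc_mul_eq_sum_sum (gAF f)
    (ArithmeticFunction.moebius : ArithmeticFunction ℝ) X
  rw [gAF, mul_assoc, ArithmeticFunction.coe_zeta_mul_coe_moebius, mul_one] at h
  simp only [ArithmeticFunction.intCoe_apply] at h
  rw [gAF, ← h]
  refine sum_congr rfl fun n hn ↦ ?_
  rw [toAF_apply f (mem_Ioc.1 hn).1.ne']

lemma moebius_sum_le_vfun : ∃ C : ℝ, 0 < C ∧ ∀ N : ℕ, 1 ≤ N →
    |∑ n ∈ Ioc 0 N, (ArithmeticFunction.moebius n : ℝ)| ≤ C * ∑ k ∈ Ioc 0 N, vfun k := by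
  obtain ⟨C, hC, h⟩ := moebius_sum_bound
  refine ⟨C, hC, fun N hN ↦ ?_⟩
  have h1 : ∑ n ∈ Ioc 0 N, (ArithmeticFunction.moebius n : ℝ) =
      ∑ n ∈ range (N + 1), (ArithmeticFunction.moebius n : ℝ) := by
    refine sum_subset (fun n hn ↦ ?_) fun n hn hn2 ↦ ?_
    · rw [mem_Ioc] at hn; rw [mem_range]; omega
    · have : n = 0 := by rw [mem_Ioc] at hn2; rw [mem_range] at hn; omega
      simp [this]
  rw [h1]
  refine (h N hN).trans ?_
  gcongr
  exact vfun_sum_ge N hN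

theorem stmt9 :
    ∃ C > (0 : ℝ), ∀ x : ℝ, 3 ≤ x → ∀ f : ℕ → ℝ,
      f 1 = 1 →
      (∀ m n : ℕ, Nat.Coprime m n → f (m * n) = f m * f n) →
      (∀ n : ℕ, 1 ≤ n → |f n| ≤ 1) →
      (∀ n : ℕ, 1 ≤ n → (∃ p : ℕ, p ∈ n.primeFactors ∧ x ^ (0.99 : ℝ) < (p : ℝ)) → f n = 0) →
      |∑ n ∈ Finset.Icc 1 ⌊x⌋₊, f n| ≤
        C * x * Real.exp (∑ p ∈ (Finset.range (⌊x⌋₊ + 1)).filter Nat.Prime, f p / (p : ℝ)) := by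
  obtain ⟨C1, hC1, hM⟩ := moebius_sum_le_vfun
  obtain ⟨C2, hC2, hW⟩ := good_W_le
  obtain ⟨C3, hC3, hP⟩ := good_P_le
  obtain ⟨C4, hC4, hE⟩ := mertens_upper
  refine ⟨C1 * C2 * C3 * C4, by positivity, fun x hx f h1 hm hb _ ↦ ?_⟩
  set X := ⌊x⌋₊ with hXd
  have hX3 : 3 ≤ X := Nat.le_floor (by exact_mod_cast hx)
  have hXx : (X : ℝ) ≤ x := Nat.floor_le (by linarith)
  have hL := log_ge_one_of_three hX3
  have hgood := gAF_good f h1 hm hb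
  change |∑ n ∈ Finset.Icc 1 X, f n| ≤ C1 * C2 * C3 * C4 * x *
    Real.exp (∑ p ∈ (X + 1).primesBelow, f p / (p : ℝ))
  have hIcc : Finset.Icc 1 X = Ioc 0 X := by ext n; simp [Nat.succ_le_iff]
  rw [hIcc, sum_f_eq]
  set E := Real.exp (∑ p ∈ (X + 1).primesBelow, f p / (p : ℝ)) with hEd
  have hE0 : 0 < E := Real.exp_pos _
  have e1 : |∑ d ∈ Ioc 0 X, gAF f d * ∑ n ∈ Ioc 0 (X / d), (ArithmeticFunction.moebius n : ℝ)| ≤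
      C1 * ∑ d ∈ Ioc 0 X, absAF (gAF f) d * ∑ k ∈ Ioc 0 (X / d), vfun k := by
    refine (abs_sum_le_sum_abs _ _).trans ?_
    rw [mul_sum]
    refine sum_le_sum fun d hd ↦ ?_
    rw [mem_Ioc] at hd
    rw [abs_mul, absAF_apply]
    calc _ ≤ |gAF f d| * (C1 * ∑ k ∈ Ioc 0 (X / d), vfun k) :=
          mul_le_mul_of_nonneg_left (hM _ ((Nat.one_le_div_iff hd.1).2 hd.2)) (abs_nonneg _)
      _ = _ := by ring
  have e2 := hW _ hgood X
  have e3 := hP _ hgood X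
  have e4 := hE X hX3
  have e5 : Real.exp (∑ p ∈ (X + 1).primesBelow, absAF (gAF f) p / p) =
      Real.exp (∑ p ∈ (X + 1).primesBelow, 1 / (p : ℝ)) * E := by
    rw [hEd, ← Real.exp_add, ← sum_add_distrib]
    congr 1
    refine sum_congr rfl fun p hp ↦ ?_
    have hp' := Nat.prime_of_mem_primesBelow hp
    have h2 := (abs_le.1 (hb p hp'.one_le)).1
    rw [absAF_apply, gAF_prime f h1 hp', abs_of_nonneg (by linarith), add_div]
  rw [e5] at e3
  set W := ∑ d ∈ Ioc 0 X, absAF (gAF f) d * ∑ k ∈ Ioc 0 (X / d), vfun k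
  have e6 : W * Real.log X ≤ (C2 * X * (C3 * (C4 * E))) * Real.log X := by
    calc W * Real.log X ≤ _ := e2
      _ ≤ C2 * X * (C3 * ((C4 * Real.log X) * E)) := by
          gcongr
          exact e3.trans (by gcongr)
      _ = _ := by ring
  have e7 := le_of_mul_le_mul_right e6 (by linarith)
  calc _ ≤ C1 * W := e1
    _ ≤ C1 * (C2 * X * (C3 * (C4 * E))) := by gcongr
    _ ≤ C1 * (C2 * x * (C3 * (C4 * E))) := by gcongr
    _ = _ := by ring
end

section
/- There exists a constant y₁ ≥ 2 such that for all y ≥ y₁ and all real x, z > 0, one has Ψ(x + z, y) − Ψ(x, y) ≤ Ψ(z, y) + 1. -/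
open Finset
open scoped Classical

/-- `Psi x y` is the number of positive integers `n ≤ x` all of whose prime
factors are at most `y`. -/
noncomputable def Psi (x y : ℝ) : ℕ :=
  ((Finset.Icc 1 ⌊x⌋₊).filter fun n => ∀ p : ℕ, p ∈ n.primeFactors → (p : ℝ) ≤ y).card

def Sm (Y m : ℕ) : Prop := ∀ p ∈ m.primeFactors, p ≤ Y

noncomputable def SS (Y n : ℕ) : Finset ℕ := (Finset.Ioc 0 n).filter (Sm Y)

noncomputable def FF (Y n : ℕ) : ℕ := (SS Y n).card

noncomputable def LL (Y n : ℕ) : ℝ := ∑ m ∈ SS Y n, Real.log m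

lemma mem_SS {Y n m : ℕ} : m ∈ SS Y n ↔ (0 < m ∧ m ≤ n) ∧ Sm Y m := by
  simp [SS]

lemma Sm_mul {Y a b : ℕ} (ha : a ≠ 0) (hb : b ≠ 0) : Sm Y (a * b) ↔ Sm Y a ∧ Sm Y b := by
  unfold Sm
  rw [Nat.primeFactors_mul ha hb]
  constructor
  · intro h
    exact ⟨fun p hp => h p (Finset.mem_union_left _ hp), fun p hp => h p (Finset.mem_union_right _ hp)⟩
  · rintro ⟨h1, h2⟩ p hp
    rcases Finset.mem_union.mp hp with h | h
    · exact h1 p h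
    · exact h2 p h

lemma Sm_of_le {Y m : ℕ} (h : m ≤ Y) : Sm Y m := fun _ hp =>
  (Nat.le_of_mem_primeFactors hp).trans h

lemma SS_mono {Y a b : ℕ} (h : a ≤ b) : SS Y a ⊆ SS Y b := by
  intro m hm
  rw [mem_SS] at *
  exact ⟨⟨hm.1.1, hm.1.2.trans h⟩, hm.2⟩

lemma FF_of_le {Y n : ℕ} (h : n ≤ Y) : FF Y n = n := by
  have : SS Y n = Finset.Ioc 0 n := by
    apply Finset.filter_true_of_mem
    intro m hm
    exact Sm_of_le ((Finset.mem_Ioc.mp hm).2.trans h)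
  rw [FF, this]; simp

lemma FF_mono {Y a b : ℕ} (h : a ≤ b) : FF Y a ≤ FF Y b := Finset.card_le_card (SS_mono h)

lemma FF_add_le (Y a k : ℕ) : FF Y (a + k) ≤ FF Y a + k := by
  have : SS Y (a + k) ⊆ SS Y a ∪ Finset.Ioc a (a + k) := by
    intro m hm
    rw [mem_SS] at hm
    rw [Finset.mem_union, mem_SS, Finset.mem_Ioc]
    rcases le_or_gt m a with h | h
    · exact Or.inl ⟨⟨hm.1.1, h⟩, hm.2⟩
    · exact Or.inr ⟨h, hm.1.2⟩
  calc FF Y (a + k) ≤ _ := Finset.card_le_card this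
    _ ≤ _ := Finset.card_union_le _ _
    _ = FF Y a + k := by simp [FF]

lemma card_SS_dvd (Y n d : ℕ) (hd : 0 < d) (hs : Sm Y d) :
    ((SS Y n).filter (fun m => d ∣ m)).card = FF Y (n / d) := by
  have : (SS Y n).filter (fun m => d ∣ m) = (SS Y (n / d)).image (fun e => d * e) := by
    ext m
    simp only [Finset.mem_filter, Finset.mem_image, mem_SS]
    constructor
    · rintro ⟨⟨⟨h0, h1⟩, h2⟩, e, rfl⟩
      have he : 0 < e := Nat.pos_of_mul_pos_left h0
      refine ⟨e, ⟨⟨he, ?_⟩, ((Sm_mul hd.ne' he.ne').mp h2).2⟩, rfl⟩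
      rw [Nat.le_div_iff_mul_le hd, mul_comm]; exact h1
    · rintro ⟨e, ⟨⟨he, h1⟩, h2⟩, rfl⟩
      refine ⟨⟨⟨Nat.mul_pos hd he, ?_⟩, (Sm_mul hd.ne' he.ne').mpr ⟨hs, h2⟩⟩, dvd_mul_right _ _⟩
      rw [Nat.le_div_iff_mul_le hd, mul_comm] at h1; exact h1
  rw [this, Finset.card_image_of_injective, FF]
  intro a b h
  exact Nat.eq_of_mul_eq_mul_left hd h

lemma LL_eq (Y n Q : ℕ) (h : n ≤ Q) :
    LL Y n = ∑ d ∈ SS Y Q, ArithmeticFunction.vonMangoldt d * (FF Y (n / d) : ℝ) := by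
  have h1 : ∀ m ∈ SS Y n, Real.log m =
      ∑ d ∈ SS Y Q, if d ∣ m then ArithmeticFunction.vonMangoldt d else 0 := by
    intro m hm
    rw [← ArithmeticFunction.vonMangoldt_sum, ← Finset.sum_filter]
    apply Finset.sum_congr _ (fun _ _ => rfl)
    ext d
    rw [mem_SS] at hm
    simp only [Nat.mem_divisors, Finset.mem_filter, mem_SS]
    constructor
    · rintro ⟨hd, h0⟩
      obtain ⟨e, rfl⟩ := hd
      have hd0 : d ≠ 0 := by rintro rfl; simp at h0
      have he0 : e ≠ 0 := by rintro rfl; simp at h0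
      have := Nat.le_of_dvd hm.1.1 (dvd_mul_right d e)
      exact ⟨⟨⟨Nat.pos_of_ne_zero hd0, by omega⟩, ((Sm_mul hd0 he0).mp hm.2).1⟩, dvd_mul_right _ _⟩
    · rintro ⟨_, hd⟩
      exact ⟨hd, hm.1.1.ne'⟩
  rw [LL, Finset.sum_congr rfl h1, Finset.sum_comm]
  apply Finset.sum_congr rfl
  intro d hd
  rw [mem_SS] at hd
  rw [← Finset.sum_filter, Finset.sum_const, card_SS_dvd Y n d hd.1.1 hd.2, nsmul_eq_mul, mul_comm]

lemma sum_vonMangoldt_le (Y Q : ℕ) :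
    ∑ d ∈ SS Y Q, ArithmeticFunction.vonMangoldt d ≤ (Nat.primeCounting Y : ℝ) * Real.log Q := by
  have h0 : ∑ d ∈ SS Y Q, ArithmeticFunction.vonMangoldt d
      = ∑ d ∈ (SS Y Q).filter IsPrimePow, ArithmeticFunction.vonMangoldt d := by
    rw [Finset.sum_filter]
    apply Finset.sum_congr rfl
    intro d _
    rw [ArithmeticFunction.vonMangoldt_apply]
    split_ifs <;> rfl
  set P := (Finset.range (Y + 1)).filter Nat.Prime with hP
  have hmaps : ∀ d ∈ (SS Y Q).filter IsPrimePow, d.minFac ∈ P := by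
    intro d hd
    rw [Finset.mem_filter, mem_SS] at hd
    have hp := Nat.minFac_prime hd.2.ne_one
    have : d.minFac ≤ Y := hd.1.2 _ (Nat.mem_primeFactors.mpr ⟨hp, Nat.minFac_dvd d, hd.1.1.1.ne'⟩)
    rw [hP, Finset.mem_filter, Finset.mem_range]
    exact ⟨by omega, hp⟩
  rw [h0, ← Finset.sum_fiberwise_of_maps_to hmaps]
  have hcard : (P.card : ℝ) = Nat.primeCounting Y := by
    rw [Nat.primeCounting, Nat.primeCounting', Nat.count_eq_card_filter_range]
  rw [← hcard, ← nsmul_eq_mul]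
  apply Finset.sum_le_card_nsmul
  intro p hp
  rw [hP, Finset.mem_filter] at hp
  have hsub : ((SS Y Q).filter IsPrimePow).filter (fun d => d.minFac = p) ⊆
      (Finset.Ioc 0 (Nat.log p Q)).image (fun k => p ^ k) := by
    intro d hd
    rw [Finset.mem_filter, Finset.mem_filter, mem_SS] at hd
    obtain ⟨⟨⟨⟨h1, h2⟩, h3⟩, h4⟩, h5⟩ := hd
    rw [isPrimePow_nat_iff] at h4
    obtain ⟨q, k, hq, hk, rfl⟩ := h4
    rw [hq.pow_minFac hk.ne'] at h5
    subst h5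
    rw [Finset.mem_image]
    exact ⟨k, Finset.mem_Ioc.mpr ⟨hk, Nat.le_log_of_pow_le hq.one_lt h2⟩, rfl⟩
  have hlog : 0 ≤ Real.log p := Real.log_natCast_nonneg p
  calc _ ≤ ∑ d ∈ ((SS Y Q).filter IsPrimePow).filter (fun d => d.minFac = p), Real.log p := by
        apply Finset.sum_le_sum
        intro d hd
        rw [Finset.mem_filter, Finset.mem_filter] at hd
        rw [ArithmeticFunction.vonMangoldt_apply, if_pos hd.1.2, hd.2]
    _ = (((SS Y Q).filter IsPrimePow).filter (fun d => d.minFac = p)).card * Real.log p := by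
        rw [Finset.sum_const, nsmul_eq_mul]
    _ ≤ (Nat.log p Q : ℝ) * Real.log p := by
        apply mul_le_mul_of_nonneg_right _ hlog
        have := (Finset.card_le_card hsub).trans Finset.card_image_le
        rw [Nat.card_Ioc, Nat.sub_zero] at this
        exact_mod_cast this
    _ ≤ Real.log Q := by
        rcases Nat.eq_zero_or_pos Q with rfl | hQ
        · simp
        · rw [← Real.log_pow]
          apply Real.log_le_log
          · have := hp.2.pos
            positivity
          · exact_mod_cast Nat.pow_log_le_self p hQ.ne'

/-- no integer up to `(Y+1)^2` has two prime factors above `Y` -/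
lemma nonsmooth_count (Y n Q : ℕ) (hn : n ≤ Q) (hQ : Q < (Y + 1) ^ 2) :
    n = FF Y n + ∑ p ∈ (Finset.Ioc Y Q).filter Nat.Prime, n / p := by
  have h1 : ((Finset.Ioc 0 n).filter (fun m => ¬ Sm Y m)).card =
      ∑ p ∈ (Finset.Ioc Y Q).filter Nat.Prime, n / p := by
    have : (Finset.Ioc 0 n).filter (fun m => ¬ Sm Y m) =
        ((Finset.Ioc Y Q).filter Nat.Prime).biUnion
          (fun p => (Finset.Ioc 0 n).filter (fun m => p ∣ m)) := by
      ext m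
      rw [Finset.mem_filter, Finset.mem_biUnion, Finset.mem_Ioc]
      simp only [Finset.mem_filter, Finset.mem_Ioc]
      have hS : ¬ Sm Y m ↔ ∃ p, p ∈ m.primeFactors ∧ Y < p := by
        unfold Sm
        push Not
        rfl
      rw [hS]
      constructor
      · rintro ⟨⟨h0, h1⟩, p, hp, hpY⟩
        have := Nat.le_of_mem_primeFactors hp
        exact ⟨p, ⟨⟨hpY, by omega⟩, Nat.prime_of_mem_primeFactors hp⟩, ⟨h0, h1⟩,
          Nat.dvd_of_mem_primeFactors hp⟩
      · rintro ⟨p, ⟨⟨hpY, _⟩, hp⟩, ⟨h0, h1⟩, hd⟩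
        exact ⟨⟨h0, h1⟩, p, Nat.mem_primeFactors.mpr ⟨hp, hd, h0.ne'⟩, hpY⟩
    rw [this, Finset.card_biUnion]
    · apply Finset.sum_congr rfl
      intro p _
      exact Nat.Ioc_filter_dvd_card_eq_div n p
    · intro p hp q hq hpq
      rw [Finset.mem_coe, Finset.mem_filter, Finset.mem_Ioc] at hp hq
      rw [Function.onFun, Finset.disjoint_left]
      intro m hm hm'
      rw [Finset.mem_filter, Finset.mem_Ioc] at hm hm'
      have hc : Nat.Coprime p q := (Nat.coprime_primes hp.2 hq.2).mpr hpq
      have := Nat.le_of_dvd hm.1.1 (hc.mul_dvd_of_dvd_of_dvd hm.2 hm'.2)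
      have h2 : (Y + 1) * (Y + 1) ≤ p * q := Nat.mul_le_mul hp.1.1 hq.1.1
      nlinarith [hm.1.2]
  have h2 := Finset.card_filter_add_card_filter_not (s := Finset.Ioc 0 n) (Sm Y)
  rw [h1, Nat.card_Ioc, Nat.sub_zero] at h2
  exact h2.symm

lemma caseA (Y a c : ℕ) (h : a + c + 1 < (Y + 1) ^ 2) :
    FF Y (a + c + 1) ≤ FF Y a + FF Y c + 1 := by
  have h1 := nonsmooth_count Y (a + c + 1) (a + c + 1) le_rfl h
  have h2 := nonsmooth_count Y a (a + c + 1) (by omega) h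
  have h3 := nonsmooth_count Y c (a + c + 1) (by omega) h
  have h4 : ∑ p ∈ (Finset.Ioc Y (a + c + 1)).filter Nat.Prime, a / p +
      ∑ p ∈ (Finset.Ioc Y (a + c + 1)).filter Nat.Prime, c / p ≤
      ∑ p ∈ (Finset.Ioc Y (a + c + 1)).filter Nat.Prime, (a + c + 1) / p := by
    rw [← Finset.sum_add_distrib]
    apply Finset.sum_le_sum
    intro p _
    exact Nat.div_add_div_le_add_div.trans (Nat.div_le_div_right (by omega))
  omega

lemma LL_le (Y c : ℕ) (hY : 0 < Y) (h : Y ≤ c) :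
    LL Y c ≤ FF Y c * Real.log c - Y * (Real.log c - Real.log Y) := by
  have h1 : ∑ m ∈ SS Y Y, (Real.log c - Real.log m) ≤ ∑ m ∈ SS Y c, (Real.log c - Real.log m) := by
    apply Finset.sum_le_sum_of_subset_of_nonneg (SS_mono h)
    intro m hm _
    rw [mem_SS] at hm
    have := Real.log_le_log (by exact_mod_cast hm.1.1) (show (m : ℝ) ≤ c by exact_mod_cast hm.1.2)
    linarith
  have h2 : (Y : ℝ) * (Real.log c - Real.log Y) ≤ ∑ m ∈ SS Y Y, (Real.log c - Real.log m) := by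
    have hc : (SS Y Y).card = Y := FF_of_le le_rfl
    have := Finset.card_nsmul_le_sum (SS Y Y) (fun m : ℕ => Real.log c - Real.log m)
      (Real.log c - Real.log Y) (by
        intro m hm
        rw [mem_SS] at hm
        have := Real.log_le_log (by exact_mod_cast hm.1.1)
          (show (m : ℝ) ≤ Y by exact_mod_cast hm.1.2)
        linarith)
    rwa [hc, nsmul_eq_mul] at this
  have h3 := h2.trans h1
  rw [Finset.sum_sub_distrib, Finset.sum_const, nsmul_eq_mul] at h3
  unfold LL FF
  linarith

lemma LL_diff (Y a b : ℕ) (h : a ≤ b) :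
    ((FF Y b : ℝ) - FF Y a) * Real.log (a + 1) ≤ LL Y b - LL Y a := by
  have hs := SS_mono (Y := Y) h
  have h1 : LL Y b - LL Y a = ∑ m ∈ SS Y b \ SS Y a, Real.log m := by
    rw [LL, LL, ← Finset.sum_sdiff hs]; ring
  have h2 : ((FF Y b : ℝ) - FF Y a) = (SS Y b \ SS Y a).card := by
    rw [Finset.card_sdiff_of_subset hs, Nat.cast_sub (Finset.card_le_card hs)]; rfl
  rw [h1, h2, ← nsmul_eq_mul]
  apply Finset.card_nsmul_le_sum
  intro m hm
  rw [Finset.mem_sdiff, mem_SS, mem_SS] at hm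
  apply Real.log_le_log (by positivity)
  have : a + 1 ≤ m := by
    by_contra hh
    exact hm.2 ⟨⟨hm.1.1.1, by omega⟩, hm.1.2⟩
  exact_mod_cast this

lemma pi_le (Y : ℕ) (hY : 1000 ≤ Y) : (Nat.primeCounting Y : ℝ) ≤ 3 / 10 * Y := by
  have h := Nat.primeCounting'_add_le (a := 30) (k := 31) (by norm_num) (by norm_num) (Y - 30)
  have e : 31 + (Y - 30) = Y + 1 := by omega
  have t : Nat.totient 30 = 8 := by decide
  have q : Nat.primeCounting' 31 = 10 := by norm_num [Nat.primeCounting', Nat.count_succ]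
  rw [e, t, q] at h
  have h' : Nat.primeCounting Y = Nat.primeCounting' (Y + 1) := rfl
  have : 10 * Nat.primeCounting Y ≤ 3 * Y := by omega
  have : (10 : ℝ) * Nat.primeCounting Y ≤ 3 * Y := by exact_mod_cast this
  linarith

lemma caseB (Y a c : ℕ) (hY : 1000 ≤ Y) (hc : Y ≤ c) (hca : c ≤ a)
    (hbig : (Y + 1) ^ 2 ≤ a + c + 1)
    (ih : ∀ a' c', a' + c' < a + c → FF Y (a' + c' + 1) ≤ FF Y a' + FF Y c' + 1) :
    FF Y (a + c + 1) ≤ FF Y a + FF Y c + 1 := by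
  by_contra hcon
  set Q := a + c + 1 with hQ
  have hrec : LL Y Q ≤ LL Y a + LL Y c + Nat.primeCounting Y * Real.log Q := by
    rw [LL_eq Y Q Q le_rfl, LL_eq Y a Q (by omega), LL_eq Y c Q (by omega),
      ← Finset.sum_add_distrib]
    refine le_trans ?_ (add_le_add_right (sum_vonMangoldt_le Y Q) _)
    rw [← Finset.sum_add_distrib]
    apply Finset.sum_le_sum
    intro d hd
    rw [mem_SS] at hd
    rcases Nat.lt_or_ge d 2 with h | h
    · have : d = 1 := by omega
      subst this
      simp
    · have h1 : Q / d ≤ a / d + c / d + 1 := by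
        rw [← Nat.lt_add_one_iff, Nat.div_lt_iff_lt_mul (by omega)]
        have e1 := Nat.div_add_mod a d
        have e2 := Nat.div_add_mod c d
        have m1 := Nat.mod_lt a (show d > 0 by omega)
        have m2 := Nat.mod_lt c (show d > 0 by omega)
        nlinarith
      have h2 : a / d < a := Nat.div_lt_self (by omega) h
      have h3 : c / d ≤ c := Nat.div_le_self _ _
      have h4 := (FF_mono (Y := Y) h1).trans (ih (a / d) (c / d) (by omega))
      have h5 : (FF Y (Q / d) : ℝ) ≤ FF Y (a / d) + FF Y (c / d) + 1 := by exact_mod_cast h4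
      have h6 := mul_le_mul_of_nonneg_left h5
        (ArithmeticFunction.vonMangoldt_nonneg (n := d))
      linarith
  have hd := LL_diff Y a Q (by omega)
  have hl := LL_le Y c (by omega) hc
  have hp := pi_le Y hY
  have hFc : (Y : ℝ) ≤ FF Y c := by
    have := FF_mono (Y := Y) hc
    rw [FF_of_le le_rfl] at this
    exact_mod_cast this
  have hN : (FF Y c : ℝ) ≤ FF Y Q - FF Y a := by
    have : FF Y c + FF Y a ≤ FF Y Q := by omega
    have : (FF Y c : ℝ) + FF Y a ≤ FF Y Q := by exact_mod_cast this
    linarith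
  have hYr : (1000 : ℝ) ≤ Y := by exact_mod_cast hY
  have hcr : (Y : ℝ) ≤ c := by exact_mod_cast hc
  have hcar : (c : ℝ) ≤ a := by exact_mod_cast hca
  have hQr : (Q : ℝ) = a + c + 1 := by rw [hQ]; push_cast; ring
  have hbr : ((Y : ℝ) + 1) ^ 2 ≤ a + c + 1 := by exact_mod_cast hbig
  set A : ℝ := Real.log (a + 1)
  have hA0 : 0 ≤ A := Real.log_nonneg (by linarith)
  have hlc : Real.log c ≤ A := Real.log_le_log (by linarith) (by linarith)
  have hlQ : Real.log Q ≤ Real.log 2 + A := by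
    rw [← Real.log_mul (by norm_num) (by linarith), hQr]
    exact Real.log_le_log (by linarith) (by linarith)
  have hlA : 2 * Real.log Y ≤ Real.log 2 + A := by
    rw [← Real.log_mul (by norm_num) (by linarith)]
    have : 2 * Real.log (Y : ℝ) = Real.log ((Y : ℝ) ^ 2) := by
      rw [Real.log_pow]; norm_num
    rw [this]
    exact Real.log_le_log (by positivity) (by nlinarith)
  have hl2 : 0 < Real.log 2 := Real.log_pos (by norm_num)
  have hlY : 8 * Real.log 2 ≤ Real.log Y := by
    have : 8 * Real.log (2 : ℝ) = Real.log ((2 : ℝ) ^ 8) := by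
      rw [Real.log_pow]; norm_num
    rw [this]
    exact Real.log_le_log (by norm_num) (by norm_num; linarith)
  set π : ℝ := (Nat.primeCounting Y : ℝ)
  have hπ0 : 0 ≤ π := Nat.cast_nonneg _
  -- combine
  have k1 : (FF Y c : ℝ) * A ≤ (FF Y Q - FF Y a) * A := mul_le_mul_of_nonneg_right hN hA0
  have k2 : (Y : ℝ) * (A - Real.log c) ≤ FF Y c * (A - Real.log c) :=
    mul_le_mul_of_nonneg_right hFc (by linarith)
  have k3 : π * Real.log Q ≤ 3 / 10 * Y * (Real.log 2 + A) :=
    mul_le_mul hp hlQ (Real.log_natCast_nonneg _) (by linarith)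
  have k4 : (Y : ℝ) * (A - Real.log Y) ≤ 3 / 10 * Y * (Real.log 2 + A) := by nlinarith
  have k5 : A - Real.log Y ≤ 3 / 10 * (Real.log 2 + A) := by
    have : (Y : ℝ) * (A - Real.log Y) ≤ Y * (3 / 10 * (Real.log 2 + A)) := by linarith
    exact le_of_mul_le_mul_left this (by linarith)
  linarith

lemma main_nat (Y : ℕ) (hY : 1000 ≤ Y) : ∀ s a c : ℕ, a + c = s →
    FF Y (a + c + 1) ≤ FF Y a + FF Y c + 1 := by
  intro s
  induction s using Nat.strong_induction_on with
  | _ s ih =>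
    have key : ∀ a c : ℕ, a + c = s → c ≤ a → FF Y (a + c + 1) ≤ FF Y a + FF Y c + 1 := by
      intro a c hs hca
      rcases Nat.lt_or_ge c Y with h | h
      · have := FF_add_le Y a (c + 1)
        rw [FF_of_le h.le]
        rw [add_assoc]
        omega
      rcases Nat.lt_or_ge (a + c + 1) ((Y + 1) ^ 2) with h2 | h2
      · exact caseA Y a c h2
      · exact caseB Y a c hY h hca h2 (fun a' c' h' => ih (a' + c') (by omega) a' c' rfl)
    intro a c hs
    rcases le_total c a with h | h
    · exact key a c hs h
    · have := key c a (by omega) h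
      rw [add_comm a c]; omega

lemma Psi_eq (x y : ℝ) (hy : 0 ≤ y) : Psi x y = FF ⌊y⌋₊ ⌊x⌋₊ := by
  unfold Psi FF SS
  congr 1
  ext m
  simp only [Finset.mem_filter, Finset.mem_Icc, Finset.mem_Ioc, Sm, Nat.le_floor_iff hy]
  rfl

theorem stmt12 :
    ∃ y₁ : ℝ, 2 ≤ y₁ ∧ ∀ y : ℝ, y₁ ≤ y → ∀ x z : ℝ, 0 < x → 0 < z →
      (Psi (x + z) y : ℝ) - (Psi x y : ℝ) ≤ (Psi z y : ℝ) + 1 := by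
  refine ⟨1000, by norm_num, ?_⟩
  intro y hy x z hx hz
  have hy0 : 0 ≤ y := by linarith
  rw [Psi_eq _ _ hy0, Psi_eq _ _ hy0, Psi_eq _ _ hy0]
  have hY : 1000 ≤ ⌊y⌋₊ := Nat.le_floor (by exact_mod_cast hy)
  have hf : ⌊x + z⌋₊ ≤ ⌊x⌋₊ + ⌊z⌋₊ + 1 := by
    rw [← Nat.lt_add_one_iff, Nat.floor_lt (by linarith)]
    push_cast
    linarith [Nat.lt_floor_add_one x, Nat.lt_floor_add_one z]
  have h := (FF_mono (Y := ⌊y⌋₊) hf).trans (main_nat ⌊y⌋₊ hY _ ⌊x⌋₊ ⌊z⌋₊ rfl)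
  have h' : (FF ⌊y⌋₊ ⌊x + z⌋₊ : ℝ) ≤ FF ⌊y⌋₊ ⌊x⌋₊ + FF ⌊y⌋₊ ⌊z⌋₊ + 1 := by exact_mod_cast h
  linarith
end
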